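/- arXiv:2501.17967 — 2 statements merged into one kernel-verified Lean document; each statement's English description precedes it below -/
import Mathlib

section
/- Let γ : ℝ → ℝ² be a closed smooth regular curve with image Γ, and let Ω ⊂ ℝ² be a bounded open set whose topological frontier is Γ. Let f : ℝ² → ℝ be infinitely differentiable. Then the Newton potential v(x) := (1/(2π)) ∫_Ω log‖x − y‖ · f(y) dy has an infinitely differentiable boundary trace: the function t ↦ v(γ(t)) is in C^∞(ℝ). (Although v itself is in general only C¹ in the normal direction across Γ, its restriction to the smooth boundary is smooth.) -/
/-!
Smoothness is local in `t₀`, so split `f` by a cutoff near `γ t₀`. The part of `f` vanishing near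
`γ t₀` contributes a potential which is smooth there (`contDiffAt_far`), since the logarithm is only
used away from its singularity.

For the part near `γ t₀`, put `e = γ' t₀` and use the sweep chart `Φ z = γ (re z) + im z • (I e)`,
a diffeomorphism from a small ball around `t₀` onto a neighbourhood of `γ t₀` in which
`range γ` is exactly `Φ {im z = 0}` (`exists_chart`). Each half of the ball is connected and its
image misses `frontier Ω = range γ`, so it lies in `Ω` or is disjoint from `Ω` (`exists_side`). Hence
the near part at `x = γ s` is `∫ c (im z) log ‖γ s - Φ z‖ G z`, with `c` constant on `im z > 0` and on
`im z ≤ 0`, and `G` smooth and supported in the ball. No global information on `Ω`, such as the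
Jordan curve theorem, is needed.

The heart is `contDiffAt_near`. Writing `z = s + r (cos θ + I sin θ)`,
`Φ z - γ s = r (cos θ ψ (s, r cos θ) + sin θ I e)`, where `ψ (s, u) = (γ (s + u) - γ s) / u` is smooth
across `u = 0`. The bracket (`blowUp`) is smooth in `(s, r, θ)` and, because `re (conj e * ψ) > 0`,
never vanishes. So `log ‖γ s - Φ z‖ = log r + log ‖blowUp‖`, and the integral becomes a sum of integrals
of smooth compactly supported functions of `(s, r, θ)` against the `s`-independent locally integrable
weights `c r` and `c r log r`. Such integrals are smooth in `s` (`contDiffOn_integral_param`).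
-/

open MeasureTheory Real Set

noncomputable section

open Filter Topology Metric

/-! ### Integrals depending on a parameter, and the potential away from the support -/

/-- Integrating a smooth family `g p` with uniformly compact support against a locally integrable
weight gives a smooth function of `p`. This is smoothness of the convolution of `W` with
`x ↦ g p (-x)`, evaluated at `0`. -/
lemma contDiffOn_integral_param {P G E' : Type*} [NormedAddCommGroup P] [NormedSpace ℝ P]
    [NormedAddCommGroup G] [NormedSpace ℝ G] [MeasurableSpace G] [BorelSpace G]
    [NormedAddCommGroup E'] [NormedSpace ℝ E'] {μ : Measure G}
    {W : G → ℝ} {g : P → G → E'} {s : Set P} {k : Set G} (hs : IsOpen s) (hk : IsCompact k)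
    (hgs : ∀ p, ∀ x, p ∈ s → x ∉ k → g p x = 0) (hW : LocallyIntegrable W μ)
    (hg : ContDiffOn ℝ (⊤ : ℕ∞) (Function.uncurry g) (s ×ˢ univ)) :
    ContDiffOn ℝ (⊤ : ℕ∞) (fun p => ∫ x, W x • g p x ∂μ) s := by
  have h := contDiffOn_convolution_right_with_param (μ := μ) (ContinuousLinearMap.lsmul ℝ ℝ)
    (g := fun p x => g p (-x)) (k := Neg.neg ⁻¹' k) (n := ⊤) hs
    ((Homeomorph.neg G).isCompact_preimage.2 hk)
    (fun p x hp hx => hgs p (-x) hp hx) hW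
    (hg.comp (f := fun q : P × G => (q.1, -q.2)) (by fun_prop) (fun q hq => ⟨hq.1, mem_univ _⟩))
  have h2 := h.comp (f := fun p : P => (p, (0 : G))) (s := s) (by fun_prop)
    (fun q hq => ⟨hq, mem_univ _⟩)
  refine h2.congr fun p hp => ?_
  simp [convolution]

lemma locallyIntegrable_log_norm : LocallyIntegrable (fun z : ℂ => Real.log ‖z‖) := by
  rw [locallyIntegrable_iff]
  intro K hK
  obtain ⟨R, hR⟩ := hK.isBounded.subset_closedBall (0 : ℂ)
  refine IntegrableOn.mono_set ?_ hR
  rw [← integrable_indicator_iff measurableSet_closedBall]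
  have h : Integrable (fun z : ℂ => (Iic R).indicator Real.log ‖z‖) := by
    rw [integrable_fun_norm_addHaar volume (f := (Iic R).indicator Real.log)]
    have h1 : IntegrableOn (fun y : ℝ => y * Real.log y) (Icc 0 R) :=
      (Real.continuous_mul_log.continuousOn).integrableOn_compact isCompact_Icc
    have h2 : IntegrableOn ((Iic R).indicator (fun y : ℝ => y * Real.log y)) (Ioi 0) := by
      rw [integrableOn_indicator_iff measurableSet_Iic]
      exact h1.mono_set fun x hx => ⟨le_of_lt hx.2, hx.1⟩
    refine h2.congr_fun (fun y _ => ?_) measurableSet_Ioi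
    by_cases hy : y ∈ Iic R <;> simp [hy, Complex.finrank_real_complex]
  refine h.congr (Eventually.of_forall fun z => ?_)
  by_cases hz : ‖z‖ ≤ R <;> simp [indicator, hz]

lemma integrableOn_log_mul {Ω : Set ℂ} (hΩ : Bornology.IsBounded Ω) {g : ℂ → ℝ}
    (hg : Continuous g) (x : ℂ) : IntegrableOn (fun y => Real.log ‖x - y‖ * g y) Ω := by
  obtain ⟨R, hR⟩ := hΩ.subset_closedBall (0 : ℂ)
  refine IntegrableOn.mono_set ?_ hR
  refine IntegrableOn.mul_continuousOn ?_ hg.continuousOn (isCompact_closedBall 0 R)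
  have h1 : LocallyIntegrable (fun y : ℂ => Real.log ‖x - y‖) := by
    rw [locallyIntegrable_iff]
    intro K hK
    have h3 := locallyIntegrable_log_norm.integrableOn_isCompact
      ((Homeomorph.subLeft x).isCompact_image.2 hK)
    have h4 := ((Measure.measurePreserving_sub_left volume x).integrableOn_comp_preimage
      (Homeomorph.subLeft x).measurableEmbedding (f := fun z : ℂ => Real.log ‖z‖)
      (s := (Homeomorph.subLeft x) '' K)).2 h3
    have : (fun y => x - y) ⁻¹' ((Homeomorph.subLeft x) '' K) = K := 
      preimage_image_eq K (Homeomorph.subLeft x).injective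
    rw [this] at h4
    exact h4
  exact h1.integrableOn_isCompact (isCompact_closedBall _ _)

/-- The potential of a density vanishing near `p` is smooth at `p`. -/
lemma contDiffAt_far {Ω : Set ℂ} (hΩo : MeasurableSet Ω) (hΩ : Bornology.IsBounded Ω) {g : ℂ → ℝ}
    (hg : ContDiff ℝ (⊤ : ℕ∞) g) {p : ℂ} {ρ : ℝ} (hρ : 0 < ρ) (h0 : ∀ y ∈ ball p ρ, g y = 0) :
    ContDiffAt ℝ (⊤ : ℕ∞) (fun x => ∫ y in Ω, Real.log ‖x - y‖ * g y) p := by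
  obtain ⟨R, hR0, hR⟩ := hΩ.subset_closedBall_lt 0 (0 : ℂ)
  -- a cutoff equal to `1` on `Ω`, making the density compactly supported
  let χ : ContDiffBump (0 : ℂ) := ⟨R, R + 1, hR0, by linarith⟩
  have h : ContDiffOn ℝ (⊤ : ℕ∞) (fun x => ∫ y, (Ω.indicator 1 y : ℝ) •
      (Real.log ‖x - y‖ * g y * χ y)) (ball p ρ) := by
    refine contDiffOn_integral_param isOpen_ball (isCompact_closedBall 0 (R + 1)) ?_ ?_ ?_
    · intro x y _ hy
      have : χ y = 0 := χ.zero_of_le_dist (by simp at hy; simpa using hy.le)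
      simp [this]
    · exact ((integrable_indicator_iff hΩo).2 (integrableOn_const (C := (1 : ℝ))
      hΩ.measure_lt_top.ne)).locallyIntegrable
    · rintro ⟨x, y⟩ ⟨hx, -⟩
      apply ContDiffAt.contDiffWithinAt
      by_cases hxy : x = y
      -- on the diagonal, `y` lies in the ball where `g` vanishes
      · have : (Function.uncurry fun (x y : ℂ) => Real.log ‖x - y‖ * g y * χ y) =ᶠ[𝓝 (x, y)]
            fun _ => 0 := by
          have : ∀ᶠ q : ℂ × ℂ in 𝓝 (x, y), q.2 ∈ ball p ρ :=
            (continuous_snd.continuousAt (x := (x, y))).eventually_mem (isOpen_ball.mem_nhds (hxy ▸ hx))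
          filter_upwards [this] with q hq
          simp [Function.uncurry, h0 _ hq]
        exact contDiffAt_const.congr_of_eventuallyEq this
      · have hne : x - y ≠ 0 := sub_ne_zero.2 hxy
        have h1 : ContDiffAt ℝ (⊤ : ℕ∞) (fun q : ℂ × ℂ => Real.log ‖q.1 - q.2‖) (x, y) :=
          ContDiffAt.log (ContDiffAt.norm ℝ (by fun_prop) hne) (by simpa using hne)
        have h2 : ContDiff ℝ (⊤ : ℕ∞) (fun y => χ y) := χ.contDiff
        exact (h1.mul (hg.comp contDiff_snd).contDiffAt).mul (h2.comp contDiff_snd).contDiffAt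
  refine (h.contDiffAt (ball_mem_nhds p hρ)).congr_of_eventuallyEq (Eventually.of_forall fun x => ?_)
  dsimp only
  rw [← integral_indicator hΩo]
  congr 1
  ext y
  by_cases hy : y ∈ Ω
  · have : χ y = 1 := χ.one_of_mem_closedBall (hR hy)
    simp [hy, this]
  · simp [hy]

/-! ### The sweep chart and the two sides of the curve -/

/-- The chart sweeping `γ` along the fixed direction `I * e`: the point `σ + w I` of the plane goes
to `γ σ + w I e`. It is written on `ℂ` rather than `ℝ × ℝ` so that source and target agree, as the
change of variables formula requires. -/
def sweep (γ : ℝ → ℂ) (e z : ℂ) : ℂ := γ z.re + z.im * (Complex.I * e)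

lemma sweep_ofReal (γ : ℝ → ℂ) (e : ℂ) (t : ℝ) : sweep γ e t = γ t := by simp [sweep]

lemma contDiff_sweep {γ : ℝ → ℂ} (hγ : ContDiff ℝ (⊤ : ℕ∞) γ) (e : ℂ) :
    ContDiff ℝ (⊤ : ℕ∞) (sweep γ e) := by
  unfold sweep
  have h1 : ContDiff ℝ (⊤ : ℕ∞) (fun z : ℂ => γ z.re) := hγ.comp Complex.reCLM.contDiff
  have h2 : ContDiff ℝ (⊤ : ℕ∞) (fun z : ℂ => (z.im : ℂ)) :=
    Complex.ofRealCLM.contDiff.comp Complex.imCLM.contDiff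
  exact h1.add (h2.mul contDiff_const)

/-- The derivative of `sweep γ e` at a point over which `γ` has velocity `a`: the real-linear map
`x + y I ↦ x a + y I e`. -/
def sweepDeriv (a e : ℂ) : ℂ →L[ℝ] ℂ :=
  Complex.reCLM.smulRight a + Complex.imCLM.smulRight (Complex.I * e)

lemma hasFDerivAt_sweep {γ : ℝ → ℂ} (hγ : ContDiff ℝ (⊤ : ℕ∞) γ) (e z : ℂ) :
    HasFDerivAt (sweep γ e) (sweepDeriv (deriv γ z.re) e) z := by
  have h1 : HasFDerivAt (fun z : ℂ => γ z.re) (Complex.reCLM.smulRight (deriv γ z.re)) z := by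
    have h := ((hγ.differentiable (by simp)) z.re).hasDerivAt.hasFDerivAt.comp z
      Complex.reCLM.hasFDerivAt
    refine h.congr_fderiv ?_
    ext; simp
  have h2 : HasFDerivAt (fun z : ℂ => z.im • (Complex.I * e))
      (Complex.imCLM.smulRight (Complex.I * e)) z :=
    (Complex.imCLM.hasFDerivAt (x := z)).smul_const _
  have h := h1.add h2
  refine h.congr_of_eventuallyEq (Eventually.of_forall fun w => ?_)
  simp [sweep]

lemma det_sweepDeriv (a e : ℂ) : (sweepDeriv a e).det = ((starRingEnd ℂ) e * a).re := by
  rw [ContinuousLinearMap.det, ← LinearMap.det_toMatrix Complex.basisOneI, Matrix.det_fin_two]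
  simp [LinearMap.toMatrix_apply, sweepDeriv]
  ring

/-- Near `t₀`, the sweep along `I * γ' t₀` is injective and open, the whole curve is seen in the chart
only as the real axis, and the tangent of `γ` has positive component along `γ' t₀`. -/
lemma exists_chart {γ : ℝ → ℂ} {L : ℝ} (hL : 0 < L)
    (hγ : ContDiff ℝ (⊤ : ℕ∞) γ) (hγper : Function.Periodic γ L)
    (hγinj : Set.InjOn γ (Set.Ico 0 L)) (hγunit : ∀ t : ℝ, ‖deriv γ t‖ = 1) (t₀ : ℝ) :
    ∃ δ > 0, InjOn (sweep γ (deriv γ t₀)) (ball (t₀ : ℂ) δ) ∧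
      (∀ U ⊆ ball (t₀ : ℂ) δ, IsOpen U → IsOpen (sweep γ (deriv γ t₀) '' U)) ∧
      (∀ z ∈ ball (t₀ : ℂ) δ, sweep γ (deriv γ t₀) z ∈ range γ → z.im = 0) ∧
      (∀ t ∈ ball t₀ δ, 0 < ((starRingEnd ℂ) (deriv γ t₀) * deriv γ t).re) := by
  set e := deriv γ t₀ with he
  have he1 : ‖e‖ = 1 := hγunit t₀
  obtain ⟨u, hu⟩ : ∃ u : Circle, (u : ℂ) = e := ⟨⟨e, by simpa [Submonoid.unitSphere] using he1⟩, rfl⟩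
  let R : ℂ ≃L[ℝ] ℂ := (rotation u).toContinuousLinearEquiv
  -- at `t₀` the derivative is multiplication by `e`, a rotation
  have hR : (R : ℂ →L[ℝ] ℂ) = sweepDeriv (deriv γ (t₀ : ℂ).re) e := by
    ext z
    have h : rotation u z = e * z := by rw [rotation_apply, hu]
    simp only [R, sweepDeriv, Complex.ofReal_re, ← he]
    change rotation u z = _
    rw [h]
    have hz := Complex.re_add_im z
    simp
    linear_combination -e * hz
  have hS : HasFDerivAt (sweep γ e) (R : ℂ →L[ℝ] ℂ) (t₀ : ℂ) := hR ▸ hasFDerivAt_sweep hγ e t₀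
  have hS2 : HasStrictFDerivAt (sweep γ e) (R : ℂ →L[ℝ] ℂ) (t₀ : ℂ) :=
    (contDiff_sweep hγ e).contDiffAt.hasStrictFDerivAt' hS (by simp)
  let E := hS2.toOpenPartialHomeomorph
  have hE : (E : ℂ → ℂ) = sweep γ e := hS2.toOpenPartialHomeomorph_coe
  have hmem : (t₀ : ℂ) ∈ E.source := hS2.mem_toOpenPartialHomeomorph_source
  -- the tangent stays in the open half plane around `e`
  have hcont : Continuous (fun t => ((starRingEnd ℂ) e * deriv γ t).re) := by
    have := hγ.continuous_deriv (by simp)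
    fun_prop
  have hpos : ∀ᶠ t in 𝓝 t₀, 0 < ((starRingEnd ℂ) e * deriv γ t).re := by
    refine hcont.continuousAt.eventually (lt_mem_nhds ?_)
    have : (starRingEnd ℂ) e * e = 1 := by
      rw [mul_comm, Complex.mul_conj, Complex.normSq_eq_norm_sq, he1]; simp
    change 0 < ((starRingEnd ℂ) e * e).re
    rw [this]; simp
  obtain ⟨δ₁, hδ₁, h1⟩ := Metric.eventually_nhds_iff_ball.1 hpos
  obtain ⟨δ₂, hδ₂, h2⟩ := Metric.isOpen_iff.1 E.open_source _ hmem
  obtain ⟨δ₃, hδ₃, h31, h32, h33⟩ : ∃ δ₃ > 0, δ₃ ≤ δ₁ ∧ δ₃ ≤ δ₂ ∧ δ₃ ≤ L / 2 :=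
    ⟨min (min δ₁ δ₂) (L / 2), by positivity, (min_le_left _ _).trans (min_le_left _ _),
      (min_le_left _ _).trans (min_le_right _ _), min_le_right _ _⟩
  -- the rest of the period stays away from `γ t₀`, hence from a small chart domain
  have hinj : ∀ t ∈ Icc (t₀ + δ₃) (t₀ + L - δ₃), γ t ≠ γ t₀ := by
    intro t ht heq
    have ha := toIcoMod_mem_Ico hL 0 t
    have hb := toIcoMod_mem_Ico hL 0 t₀
    rw [zero_add] at ha hb
    have hper : ∀ s, γ (toIcoMod hL 0 s) = γ s := fun s => by
      rw [toIcoMod]; exact hγper.sub_zsmul_eq _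
    have h := hγinj ha hb (by rw [hper, hper, heq])
    rw [toIcoMod_inj] at h
    obtain ⟨n, hn⟩ := AddCommGroup.modEq_iff_zsmul.1 h
    rw [zsmul_eq_mul] at hn
    have h4 : -1 < n := by
      by_contra h
      have : (n : ℝ) ≤ -1 := by exact_mod_cast not_lt.1 h
      nlinarith [ht.1, ht.2]
    have h5 : n < 0 := by
      by_contra h
      have : (0 : ℝ) ≤ n := by exact_mod_cast not_lt.1 h
      nlinarith [ht.1, ht.2]
    omega
  have hK : IsCompact (γ '' Icc (t₀ + δ₃) (t₀ + L - δ₃)) := isCompact_Icc.image hγ.continuous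
  have hKc : ∀ᶠ z in 𝓝 (t₀ : ℂ), sweep γ e z ∈ (γ '' Icc (t₀ + δ₃) (t₀ + L - δ₃))ᶜ := by
    refine (contDiff_sweep hγ e).continuous.continuousAt.eventually_mem
      (hK.isClosed.isOpen_compl.mem_nhds ?_)
    rw [sweep_ofReal]
    rintro ⟨t, ht, h⟩
    exact hinj t ht h
  obtain ⟨δ₄, hδ₄, h4⟩ := Metric.eventually_nhds_iff_ball.1 hKc
  have hinjE : InjOn (sweep γ e) (ball (t₀ : ℂ) δ₃) := by
    rw [← hE]; exact E.injOn.mono ((ball_subset_ball h32).trans h2)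
  refine ⟨min δ₃ δ₄, by positivity, hinjE.mono (ball_subset_ball (min_le_left _ _)), ?_, ?_, ?_⟩
  · intro U hU hUo
    rw [← hE]
    exact E.isOpen_image_of_subset_source hUo
      (hU.trans ((ball_subset_ball ((min_le_left _ _).trans h32)).trans h2))
  · rintro z hz ⟨t, ht⟩
    have hz3 := ball_subset_ball (min_le_left δ₃ δ₄) hz
    have hz4 := h4 z (ball_subset_ball (min_le_right δ₃ δ₄) hz)
    -- choose the parameter in the period around `t₀`; it lies in `(t₀ - δ₃, t₀ + δ₃)`
    obtain ⟨s, hs, hst⟩ : ∃ s ∈ Ico (t₀ - δ₃) (t₀ - δ₃ + L), γ s = γ t :=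
      ⟨toIcoMod hL (t₀ - δ₃) t, toIcoMod_mem_Ico hL _ t, by
        rw [toIcoMod]; exact hγper.sub_zsmul_eq _⟩
    have hs2 : ¬ (t₀ + δ₃ ≤ s) := fun h => hz4 ⟨s, ⟨h, by linarith [hs.2]⟩, by rw [hst, ht]⟩
    have hs3 : s ≠ t₀ - δ₃ := by
      rintro rfl
      refine hz4 ⟨t₀ - δ₃ + L, ⟨by linarith, by linarith⟩, ?_⟩
      rw [hγper, hst, ht]
    have hsm : (s : ℂ) ∈ ball (t₀ : ℂ) δ₃ := by
      rw [mem_ball, Complex.dist_of_im_eq (by simp)]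
      simp only [Complex.ofReal_re, Real.dist_eq]
      rw [abs_lt]
      have := lt_of_le_of_ne hs.1 hs3.symm
      constructor <;> linarith
    have := hinjE hz3 hsm (by rw [sweep_ofReal, hst, ht])
    simp [this]
  · intro t ht
    exact h1 t (ball_subset_ball ((min_le_left _ _).trans h31) ht)

lemma subset_or_disjoint_of_disjoint_frontier {X : Type*} [TopologicalSpace X] {S Ω : Set X}
    (hS : IsPreconnected S) (h : Disjoint S (frontier Ω)) : S ⊆ Ω ∨ Disjoint S Ω := by
  have hsub : S ⊆ interior Ω ∪ (closure Ω)ᶜ := by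
    intro x hx
    by_contra hc
    simp only [mem_union, mem_compl_iff, not_or, not_not] at hc
    exact disjoint_left.1 h hx ⟨hc.2, hc.1⟩
  rcases hS.subset_or_subset isOpen_interior isClosed_closure.isOpen_compl
    (disjoint_left.2 fun x hx hx' => hx' (subset_closure (interior_subset hx))) hsub with h | h
  · exact Or.inl (h.trans interior_subset)
  · exact Or.inr (disjoint_left.2 fun x hx hx' => h hx (subset_closure hx'))

/-- In the chart, membership in `Ω` depends only on the sign of `im z`. Any combination of the two
constants is allowed: `Ω` might a priori lie on both sides of the curve. -/
lemma exists_side {γ : ℝ → ℂ} (hγ : ContDiff ℝ (⊤ : ℕ∞) γ) {e c₀ : ℂ} {δ : ℝ} {Ω : Set ℂ}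
    (hfront : frontier Ω = range γ)
    (h : ∀ z ∈ ball c₀ δ, sweep γ e z ∈ range γ → z.im = 0) :
    ∃ a b : ℝ, ∀ z ∈ ball c₀ δ, z.im ≠ 0 →
      Ω.indicator (1 : ℂ → ℝ) (sweep γ e z) = if 0 < z.im then a else b := by
  have key : ∀ S : Set ℂ, Convex ℝ S → S ⊆ {z | z.im ≠ 0} → ∃ a : ℝ, ∀ z ∈ ball c₀ δ ∩ S,
      Ω.indicator (1 : ℂ → ℝ) (sweep γ e z) = a := by
    intro S hS hS0
    have hpre : IsPreconnected (sweep γ e '' (ball c₀ δ ∩ S)) :=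
      ((convex_ball c₀ δ).inter hS).isPreconnected.image _ (contDiff_sweep hγ e).continuous.continuousOn
    have hdis : Disjoint (sweep γ e '' (ball c₀ δ ∩ S)) (frontier Ω) := by
      rw [hfront, disjoint_left]
      rintro _ ⟨z, hz, rfl⟩ hz'
      exact hS0 hz.2 (h z hz.1 hz')
    rcases subset_or_disjoint_of_disjoint_frontier hpre hdis with h1 | h1
    · exact ⟨1, fun z hz => by simp [h1 (mem_image_of_mem _ hz)]⟩
    · exact ⟨0, fun z hz => by simp [disjoint_left.1 h1 (mem_image_of_mem _ hz)]⟩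
  obtain ⟨a, ha⟩ := key {z | 0 < z.im} (convex_halfSpace_im_gt 0) (fun z hz => ne_of_gt hz)
  obtain ⟨b, hb⟩ := key {z | z.im < 0} (convex_halfSpace_im_lt 0) (fun z hz => ne_of_lt hz)
  refine ⟨a, b, fun z hz hz0 => ?_⟩
  split_ifs with h0
  · exact ha z ⟨hz, h0⟩
  · exact hb z ⟨hz, lt_of_le_of_ne (not_lt.1 h0) hz0⟩

lemma ae_im_ne_zero : ∀ᵐ z : ℂ, z.im ≠ 0 := by
  have h := Complex.volume_preserving_equiv_real_prod.quasiMeasurePreserving.ae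
    (p := fun q : ℝ × ℝ => q.2 ≠ 0)
    (Measure.quasiMeasurePreserving_snd.ae (Measure.ae_ne volume (0 : ℝ)))
  exact h

/-- Change of variables to the chart for an integrand supported in its image. -/
lemma integral_eq_sweep {γ : ℝ → ℂ} (hγ : ContDiff ℝ (⊤ : ℕ∞) γ) {e c₀ : ℂ} {δ : ℝ} {Ω : Set ℂ}
    (hΩ : MeasurableSet Ω) (hinj : InjOn (sweep γ e) (ball c₀ δ)) {a b : ℝ}
    (hside : ∀ z ∈ ball c₀ δ, z.im ≠ 0 →
      Ω.indicator (1 : ℂ → ℝ) (sweep γ e z) = if 0 < z.im then a else b)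
    (hpos : ∀ z ∈ ball c₀ δ, 0 < ((starRingEnd ℂ) e * deriv γ z.re).re)
    {F : ℂ → ℝ} (hF : ∀ y ∉ sweep γ e '' ball c₀ δ, F y = 0) :
    ∫ y in Ω, F y = ∫ z in ball c₀ δ, (if 0 < z.im then a else b) *
      (((starRingEnd ℂ) e * deriv γ z.re).re * F (sweep γ e z)) := by
  rw [← integral_indicator hΩ, ← setIntegral_eq_integral_of_forall_compl_eq_zero
    (s := sweep γ e '' ball c₀ δ), integral_image_eq_integral_abs_det_fderiv_smul volume
    measurableSet_ball (fun z _ => (hasFDerivAt_sweep hγ e z).hasFDerivWithinAt) hinj]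
  · refine setIntegral_congr_ae measurableSet_ball ?_
    filter_upwards [ae_im_ne_zero] with z hz hzB
    rw [det_sweepDeriv, abs_of_pos (hpos z hzB), ← hside z hzB hz]
    by_cases h : sweep γ e z ∈ Ω <;> simp [h]
  · intro y hy
    by_cases h : y ∈ Ω <;> simp [h, hF y hy]

/-! ### The potential near the curve -/

/-- The divided difference `(γ (s + u) - γ s) / u` at `q = (s, u)`, written as the average of `γ'` over
the segment from `s` to `s + u` so that it is also correct, and smooth, at `u = 0`. -/
def divDiff (γ : ℝ → ℂ) (q : ℝ × ℝ) : ℂ := ∫ τ in (0 : ℝ)..1, deriv γ (q.1 + τ * q.2)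

lemma contDiff_divDiff {γ : ℝ → ℂ} (hγ : ContDiff ℝ (⊤ : ℕ∞) γ) :
    ContDiff ℝ (⊤ : ℕ∞) (divDiff γ) := by
  let ρ : ContDiffBump (0 : ℝ) := ⟨1, 2, by norm_num, by norm_num⟩
  have hρ : ContDiff ℝ (⊤ : ℕ∞) (fun y => ρ y) := ρ.contDiff
  have hd : ContDiff ℝ (⊤ : ℕ∞) (deriv γ) := (contDiff_infty_iff_deriv.1 hγ).2
  have h := contDiffOn_integral_param (μ := volume) (W := (Ioc (0 : ℝ) 1).indicator 1)
    (g := fun (q : ℝ × ℝ) τ => ρ τ • deriv γ (q.1 + τ * q.2)) (s := univ) isOpen_univ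
    (isCompact_closedBall (0 : ℝ) 2) (fun p x _ hx => by
      have : ρ x = 0 := ρ.zero_of_le_dist (le_of_lt (by simpa using hx))
      simp [this])
    (((integrable_indicator_iff measurableSet_Ioc).2
      (integrableOn_const (C := (1 : ℝ)) (by simp))).locallyIntegrable)
    (ContDiff.contDiffOn ((hρ.comp contDiff_snd).smul (hd.comp (by fun_prop))))
  rw [contDiffOn_univ] at h
  convert h using 1
  ext1 q
  rw [divDiff, intervalIntegral.integral_of_le zero_le_one, ← integral_indicator measurableSet_Ioc]
  congr 1
  ext1 τ
  by_cases hτ : τ ∈ Ioc (0 : ℝ) 1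
  · have : ρ τ = 1 := ρ.one_of_mem_closedBall (by
      rw [mem_closedBall_zero_iff, Real.norm_eq_abs, abs_of_pos hτ.1]; exact hτ.2)
    simp [hτ, this]
  · simp [hτ]

lemma mul_divDiff {γ : ℝ → ℂ} (hγ : ContDiff ℝ (⊤ : ℕ∞) γ) (s u : ℝ) :
    u * divDiff γ (s, u) = γ (s + u) - γ s := by
  have h : ∀ τ ∈ uIcc (0 : ℝ) 1, HasDerivAt (fun τ : ℝ => γ (s + τ * u))
      (u • deriv γ (s + τ * u)) τ := by
    intro τ _
    have h1 : HasDerivAt (fun τ : ℝ => s + τ * u) u τ := by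
      simpa using ((hasDerivAt_id τ).mul_const u).const_add s
    exact ((hγ.differentiable (by simp)) _).hasDerivAt.scomp τ h1
  have hd := hγ.continuous_deriv (by simp)
  have h2 := intervalIntegral.integral_eq_sub_of_hasDerivAt h
    (Continuous.intervalIntegrable (by fun_prop) _ _)
  rw [intervalIntegral.integral_smul] at h2
  simpa [divDiff] using h2

lemma re_divDiff_pos {γ : ℝ → ℂ} (hγ : ContDiff ℝ (⊤ : ℕ∞) γ) {e : ℂ} {t₀ δ : ℝ}
    (hpos : ∀ t ∈ ball t₀ δ, 0 < ((starRingEnd ℂ) e * deriv γ t).re) {s u : ℝ}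
    (hs : s ∈ ball t₀ δ) (hu : s + u ∈ ball t₀ δ) :
    0 < ((starRingEnd ℂ) e * divDiff γ (s, u)).re := by
  have hd := hγ.continuous_deriv (by simp)
  have h1 : ((starRingEnd ℂ) e * divDiff γ (s, u)).re =
      ∫ τ in (0 : ℝ)..1, ((starRingEnd ℂ) e * deriv γ (s + τ * u)).re := by
    rw [divDiff, ← intervalIntegral.integral_const_mul]
    exact ((Complex.reCLM).intervalIntegral_comp_comm
      (Continuous.intervalIntegrable (by fun_prop) _ _)).symm
  rw [h1]
  refine intervalIntegral.intervalIntegral_pos_of_pos_on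
    (Continuous.intervalIntegrable (by fun_prop) _ _) (fun τ hτ => hpos _ ?_) zero_lt_one
  have := (convex_ball t₀ δ).add_smul_sub_mem hs hu ⟨hτ.1.le, hτ.2.le⟩
  simpa using this

/-- The chord from `γ s` to the point of the sweep chart with polar coordinates `(r, θ)` around `s`,
divided by `r`, at `q = (s, r, θ)`; see `sweep_sub_eq`. -/
def blowUp (γ : ℝ → ℂ) (e : ℂ) (q : ℝ × ℝ × ℝ) : ℂ :=
  Real.cos q.2.2 * divDiff γ (q.1, q.2.1 * Real.cos q.2.2) + Real.sin q.2.2 * (Complex.I * e)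

lemma contDiff_blowUp {γ : ℝ → ℂ} (hγ : ContDiff ℝ (⊤ : ℕ∞) γ) (e : ℂ) :
    ContDiff ℝ (⊤ : ℕ∞) (blowUp γ e) := by
  have h := contDiff_divDiff hγ
  have hc : ContDiff ℝ (⊤ : ℕ∞) (fun q : ℝ × ℝ × ℝ => (Real.cos q.2.2 : ℂ)) :=
    Complex.ofRealCLM.contDiff.comp (Real.contDiff_cos.comp (by fun_prop))
  have hs : ContDiff ℝ (⊤ : ℕ∞) (fun q : ℝ × ℝ × ℝ => (Real.sin q.2.2 : ℂ)) :=
    Complex.ofRealCLM.contDiff.comp (Real.contDiff_sin.comp (by fun_prop))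
  have hd : ContDiff ℝ (⊤ : ℕ∞) (fun q : ℝ × ℝ × ℝ =>
      divDiff γ (q.1, q.2.1 * Real.cos q.2.2)) := h.comp (by fun_prop)
  exact (hc.mul hd).add (hs.mul contDiff_const)

lemma blowUp_ne_zero {γ : ℝ → ℂ} {e : ℂ} (he : ‖e‖ = 1) {q : ℝ × ℝ × ℝ}
    (h : 0 < ((starRingEnd ℂ) e * divDiff γ (q.1, q.2.1 * Real.cos q.2.2)).re) :
    blowUp γ e q ≠ 0 := by
  intro h0
  have hee : (starRingEnd ℂ) e * e = 1 := by
    rw [mul_comm, Complex.mul_conj, Complex.normSq_eq_norm_sq, he]; simp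
  have h1 : (Real.cos q.2.2 : ℂ) * ((starRingEnd ℂ) e * divDiff γ (q.1, q.2.1 * Real.cos q.2.2)) +
      (Real.sin q.2.2 : ℂ) * Complex.I = 0 := by
    have : (starRingEnd ℂ) e * blowUp γ e q = 0 := by rw [h0, mul_zero]
    rw [blowUp] at this
    linear_combination this - (Real.sin q.2.2 : ℂ) * Complex.I * hee
  have hre := congrArg Complex.re h1
  have him := congrArg Complex.im h1
  rw [Complex.add_re, Complex.re_ofReal_mul, Complex.re_ofReal_mul] at hre
  rw [Complex.add_im, Complex.im_ofReal_mul, Complex.im_ofReal_mul] at him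
  simp only [Complex.I_re, mul_zero, add_zero, Complex.zero_re] at hre
  have hc : Real.cos q.2.2 = 0 := (mul_eq_zero.1 hre).resolve_right h.ne'
  have hs : Real.sin q.2.2 = 0 := by simpa [hc] using him
  have := Real.sin_sq_add_cos_sq q.2.2
  simp [hc, hs] at this

lemma sweep_sub_eq {γ : ℝ → ℂ} (hγ : ContDiff ℝ (⊤ : ℕ∞) γ) (e : ℂ) (s : ℝ) (p : ℝ × ℝ) :
    sweep γ e (s + Complex.polarCoord.symm p) - γ s = p.1 * blowUp γ e (s, p) := by
  have h := mul_divDiff hγ s (p.1 * Real.cos p.2)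
  have h1 : ((s : ℂ) + Complex.polarCoord.symm p).re = s + p.1 * Real.cos p.2 := by
    simp [-Complex.ofReal_cos, -Complex.ofReal_sin]
  have h2 : ((s : ℂ) + Complex.polarCoord.symm p).im = p.1 * Real.sin p.2 := by
    simp [-Complex.ofReal_cos, -Complex.ofReal_sin]
  rw [sweep, h1, h2, blowUp]
  push_cast at h ⊢
  linear_combination -h

/-- The polar weights, extended by zero off the target of polar coordinates. As `p.1 * sin p.2` is the
imaginary part, the conditional selects the side of the curve. -/
lemma locallyIntegrable_weight {w : ℝ → ℝ} (hw : Continuous w) (a b : ℝ) :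
    LocallyIntegrable ((polarCoord.target).indicator
      (fun p : ℝ × ℝ => w p.1 * if 0 < p.1 * Real.sin p.2 then a else b)) := by
  have h1 : LocallyIntegrable (fun p : ℝ × ℝ => |w p.1| * max |a| |b|) :=
    Continuous.locallyIntegrable (by fun_prop)
  refine h1.mono ?_ (Eventually.of_forall fun p => ?_)
  · refine Measurable.aestronglyMeasurable (Measurable.indicator ?_ polarCoord.open_target.measurableSet)
    refine (hw.measurable.comp measurable_fst).mul (Measurable.ite ?_ measurable_const measurable_const)
    exact measurableSet_lt measurable_const (by fun_prop)
  · refine (norm_indicator_le_norm_self _ _).trans ?_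
    rw [norm_mul, Real.norm_eq_abs, Real.norm_eq_abs, Real.norm_eq_abs,
      abs_of_nonneg (a := |w p.1| * _) (by positivity)]
    gcongr
    split_ifs <;> simp

/-- The contribution of a neighbourhood of `γ t₀`, expressed in the sweep chart, is smooth along the
curve: in polar coordinates centred at the moving point `s`, the logarithmic singularity splits off
as the fixed weight `r * log r`. -/
lemma contDiffAt_near {γ : ℝ → ℂ} (hγ : ContDiff ℝ (⊤ : ℕ∞) γ) {e : ℂ} (he : ‖e‖ = 1) {t₀ δ : ℝ}
    (hδ : 0 < δ) (hpos : ∀ t ∈ ball t₀ δ, 0 < ((starRingEnd ℂ) e * deriv γ t).re) (a b : ℝ)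
    {G : ℂ → ℝ} (hG : ContDiff ℝ (⊤ : ℕ∞) G) (hGs : tsupport G ⊆ ball (t₀ : ℂ) δ) :
    ContDiffAt ℝ (⊤ : ℕ∞) (fun s : ℝ => ∫ z, (if 0 < z.im then a else b) *
      (Real.log ‖γ s - sweep γ e z‖ * G z)) t₀ := by
  -- If `s` and `s + r (cos θ + I sin θ)` are both within `δ` of `t₀` then `r < 2 δ`, while `|θ| ≤ π`
  -- on the polar target; so `ρ = 1` wherever the integrand is nonzero, and `ρ` makes the
  -- periodic dependence on `θ` compactly supported.
  let ρ : ContDiffBump (0 : ℝ × ℝ) := ⟨max (2 * δ) π, max (2 * δ) π + 1, by positivity, by linarith⟩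
  have hρ : ContDiff ℝ (⊤ : ℕ∞) (fun y => ρ y) := ρ.contDiff
  let G' : ℝ → ℝ × ℝ → ℝ := fun s p => G (s + Complex.polarCoord.symm p) * ρ p
  let G'' : ℝ → ℝ × ℝ → ℝ := fun s p => Real.log ‖blowUp γ e (s, p)‖ * G' s p
  have hpol : ContDiff ℝ (⊤ : ℕ∞) (fun q : ℝ × ℝ × ℝ => (q.1 : ℂ) + Complex.polarCoord.symm q.2) := by
    simp_rw [Complex.polarCoord_symm_apply]
    have ho : ContDiff ℝ (⊤ : ℕ∞) (fun x : ℝ => (x : ℂ)) := Complex.ofRealCLM.contDiff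
    refine (ho.comp (by fun_prop)).add ((ho.comp (by fun_prop)).mul ((ho.comp ?_).add
      ((ho.comp ?_).mul contDiff_const)))
    · exact Real.contDiff_cos.comp (by fun_prop)
    · exact Real.contDiff_sin.comp (by fun_prop)
  have hG' : ContDiff ℝ (⊤ : ℕ∞) (Function.uncurry G') :=
    (hG.comp hpol).mul (hρ.comp contDiff_snd)
  -- the blown-up kernel does not vanish on the support of `G`
  have hne : ∀ s ∈ ball t₀ δ, ∀ p : ℝ × ℝ, (s : ℂ) + Complex.polarCoord.symm p ∈ ball (t₀ : ℂ) δ →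
      blowUp γ e (s, p) ≠ 0 := by
    intro s hs p hp
    refine blowUp_ne_zero he (re_divDiff_pos hγ hpos hs ?_)
    rw [mem_ball, dist_eq_norm] at hp ⊢
    refine lt_of_le_of_lt ?_ hp
    have h := Complex.abs_re_le_norm ((s : ℂ) + Complex.polarCoord.symm p - t₀)
    simpa [-Complex.ofReal_cos, -Complex.ofReal_sin] using h
  have hG'' : ContDiffOn ℝ (⊤ : ℕ∞) (Function.uncurry G'') (ball t₀ δ ×ˢ univ) := by
    rintro ⟨s, p⟩ ⟨hs, -⟩
    apply ContDiffAt.contDiffWithinAt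
    by_cases hp : (s : ℂ) + Complex.polarCoord.symm p ∈ tsupport G
    · have h0 := hne s hs p (hGs hp)
      exact (((contDiff_blowUp hγ e).contDiffAt.norm ℝ h0).log (norm_ne_zero_iff.2 h0)).mul
        hG'.contDiffAt
    · have h1 : ∀ᶠ q : ℝ × ℝ × ℝ in 𝓝 (s, p), (q.1 : ℂ) + Complex.polarCoord.symm q.2 ∈ (tsupport G)ᶜ :=
        (hpol.continuous.continuousAt (x := (s, p))).eventually_mem
          ((isClosed_tsupport G).isOpen_compl.mem_nhds hp)
      refine (contDiffAt_const (c := (0 : ℝ))).congr_of_eventuallyEq ?_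
      filter_upwards [h1] with q hq
      simp only [Function.uncurry, G'', G', image_eq_zero_of_notMem_tsupport hq, zero_mul, mul_zero]
  have hρ0 : ∀ p ∉ closedBall (0 : ℝ × ℝ) (max (2 * δ) π + 1), ρ p = 0 := fun p hp =>
    ρ.zero_of_le_dist (le_of_lt (by simpa using hp))
  let W₁ : ℝ × ℝ → ℝ := (polarCoord.target).indicator
    (fun p : ℝ × ℝ => p.1 * if 0 < p.1 * Real.sin p.2 then a else b)
  let W₂ : ℝ × ℝ → ℝ := (polarCoord.target).indicator
    (fun p : ℝ × ℝ => (p.1 * Real.log p.1) * if 0 < p.1 * Real.sin p.2 then a else b)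
  have hW₁ : LocallyIntegrable W₁ := locallyIntegrable_weight continuous_id a b
  have hW₂ : LocallyIntegrable W₂ := locallyIntegrable_weight Real.continuous_mul_log a b
  have hz₁ : ∀ s, ∀ p ∉ closedBall (0 : ℝ × ℝ) (max (2 * δ) π + 1), G' s p = 0 := fun s p hp => by
    simp only [G', hρ0 p hp, mul_zero]
  have hz₂ : ∀ s, ∀ p ∉ closedBall (0 : ℝ × ℝ) (max (2 * δ) π + 1), G'' s p = 0 := fun s p hp => by
    simp only [G'', hz₁ s p hp, mul_zero]
  have h₁ := contDiffOn_integral_param (isOpen_ball (x := t₀) (ε := δ)) (isCompact_closedBall _ _)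
    (fun s p _ hp => hz₂ s p hp) hW₁ hG''
  have h₂ := contDiffOn_integral_param (isOpen_ball (x := t₀) (ε := δ)) (isCompact_closedBall _ _)
    (fun s p _ hp => hz₁ s p hp) hW₂ hG'.contDiffOn
  refine ((h₁.add h₂).contDiffAt (ball_mem_nhds t₀ hδ)).congr_of_eventuallyEq ?_
  filter_upwards [ball_mem_nhds t₀ hδ] with s hs
  have hi₁ : Integrable (fun p => W₁ p • G'' s p) := by
    refine hW₁.integrable_smul_right_of_hasCompactSupport ?_
      (HasCompactSupport.intro (isCompact_closedBall _ _) (hz₂ s))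
    exact hG''.continuousOn.comp_continuous (f := fun p : ℝ × ℝ => (s, p)) (by fun_prop)
      (fun p => ⟨hs, mem_univ _⟩)
  have hi₂ : Integrable (fun p => W₂ p • G' s p) :=
    hW₂.integrable_smul_right_of_hasCompactSupport
      (hG'.continuous.comp (f := fun p : ℝ × ℝ => (s, p)) (by fun_prop))
      (HasCompactSupport.intro (isCompact_closedBall _ _) (hz₁ s))
  rw [← integral_add hi₁ hi₂, ← integral_add_left_eq_self _ (s : ℂ),
    ← Complex.integral_comp_polarCoord_symm, ← integral_indicator polarCoord.open_target.measurableSet]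
  congr 1
  ext1 p
  by_cases hp : p ∈ polarCoord.target
  swap
  · simp only [W₁, W₂, indicator_of_notMem hp]; simp
  have hp' : 0 < p.1 ∧ -π < p.2 ∧ p.2 < π := by
    simpa [polarCoord_target] using hp
  simp only [W₁, W₂, indicator_of_mem hp, smul_eq_mul]
  have him : ((s : ℂ) + Complex.polarCoord.symm p).im = p.1 * Real.sin p.2 := by
    simp [-Complex.ofReal_cos, -Complex.ofReal_sin]
  rw [him, norm_sub_rev, sweep_sub_eq hγ]
  by_cases hz : G (s + Complex.polarCoord.symm p) = 0
  · simp only [G'', G', hz]; ring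
  have hzB := hGs (subset_tsupport G hz)
  have hr : ‖p‖ ≤ max (2 * δ) π := by
    rw [Prod.norm_def, Real.norm_eq_abs, Real.norm_eq_abs]
    refine max_le_max ?_ (abs_le.2 ⟨hp'.2.1.le, hp'.2.2.le⟩)
    rw [← Complex.norm_polarCoord_symm]
    have h1 : Complex.polarCoord.symm p = ((s : ℂ) + Complex.polarCoord.symm p - t₀) - ((s - t₀ : ℝ) : ℂ) := by
      push_cast; ring
    rw [h1]
    refine (norm_sub_le _ _).trans ?_
    rw [mem_ball, dist_eq_norm] at hzB hs
    rw [Complex.norm_real]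
    linarith
  have hρ1 : ρ p = 1 := ρ.one_of_mem_closedBall (mem_closedBall_zero_iff.2 hr)
  have h0 := hne s hs p hzB
  rw [norm_mul, Real.log_mul (by simpa using hp'.1.ne') (norm_ne_zero_iff.2 h0),
    Complex.norm_real, Real.norm_eq_abs, abs_of_pos hp'.1]
  simp only [G'', G', hρ1]
  ring

/-! ### Smoothness of the trace -/

/-- For a closed smooth regular (arc-length parametrized) curve `γ`
bounding a bounded open set `Ω ⊂ ℝ² ≅ ℂ` (i.e. `frontier Ω = Γ = range γ`) and smooth `f`,
the Newton potential `v(x) = (1/2π) ∫_Ω log‖x-y‖ f(y) dy` has smooth boundary trace: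
`t ↦ v(γ(t))` is `C^∞`. -/
theorem newtonPotential_smooth_boundary_trace
    (γ : ℝ → ℂ) (L : ℝ) (hL : 0 < L)
    (hγsmooth : ContDiff ℝ (⊤ : ℕ∞) γ) (hγper : Function.Periodic γ L)
    (hγinj : Set.InjOn γ (Set.Ico 0 L)) (hγunit : ∀ t : ℝ, ‖deriv γ t‖ = 1)
    (Ω : Set ℂ) (hΩopen : IsOpen Ω) (hΩbdd : Bornology.IsBounded Ω)
    (hfront : frontier Ω = Set.range γ)
    (f : ℂ → ℝ) (hf : ContDiff ℝ (⊤ : ℕ∞) f)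
    (v : ℂ → ℝ)
    (hv : ∀ x : ℂ, v x = (1 / (2 * π)) * ∫ y in Ω, Real.log ‖x - y‖ * f y) :
    ContDiff ℝ (⊤ : ℕ∞) (fun t : ℝ => v (γ t)) := by
  rw [contDiff_iff_contDiffAt]
  intro t₀
  obtain ⟨δ, hδ, hinj, hopen, him, hpos⟩ := exists_chart hL hγsmooth hγper hγinj hγunit t₀
  set e := deriv γ t₀ with he
  have he1 : ‖e‖ = 1 := hγunit t₀
  obtain ⟨a, b, hside⟩ := exists_side hγsmooth hfront him
  have hpos' : ∀ z ∈ ball (t₀ : ℂ) δ, 0 < ((starRingEnd ℂ) e * deriv γ z.re).re := by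
    intro z hz
    refine hpos _ ?_
    rw [mem_ball, dist_eq_norm] at hz ⊢
    exact lt_of_le_of_lt (by simpa using Complex.abs_re_le_norm (z - t₀)) hz
  -- `η` cuts off in the chart domain, `χ` in the plane, and `η = 1` wherever `χ ∘ sweep ≠ 0`
  let η : ContDiffBump (t₀ : ℂ) := ⟨δ / 3, δ / 2, by positivity, by linarith⟩
  have hηs : tsupport η ⊆ ball (t₀ : ℂ) δ := by
    rw [η.tsupport_eq]; exact closedBall_subset_ball (by change δ / 2 < δ; linarith)
  have hV := hopen (ball (t₀ : ℂ) (δ / 3)) (ball_subset_ball (by linarith)) isOpen_ball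
  obtain ⟨R, hR, hRV⟩ := Metric.isOpen_iff.1 hV (γ t₀)
    ⟨t₀, mem_ball_self (by positivity), sweep_ofReal γ e t₀⟩
  let χ : ContDiffBump (γ t₀) := ⟨R / 2, R, by positivity, by linarith⟩
  have hη : ContDiff ℝ (⊤ : ℕ∞) (fun z => η z) := η.contDiff
  have hχ : ContDiff ℝ (⊤ : ℕ∞) (fun z => χ z) := χ.contDiff
  have hχ0 : ∀ y, χ y ≠ 0 → y ∈ sweep γ e '' ball (t₀ : ℂ) (δ / 3) := by
    intro y hy
    refine hRV ?_
    have : y ∈ Function.support χ := hy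
    rwa [χ.support_eq] at this
  have hη1 : ∀ z ∈ ball (t₀ : ℂ) δ, χ (sweep γ e z) ≠ 0 → η z = 1 := by
    intro z hz h
    obtain ⟨w, hw, hwz⟩ := hχ0 _ h
    have : w = z := hinj (ball_subset_ball (by linarith) hw) hz hwz
    exact η.one_of_mem_closedBall (ball_subset_closedBall (this ▸ hw))
  -- the density `χ f` pulled back to the chart, times the Jacobian; the factor `η` restricts its support
  -- to the chart domain
  let G : ℂ → ℝ := fun z => η z * (((starRingEnd ℂ) e * deriv γ z.re).re *
    (χ (sweep γ e z) * f (sweep γ e z)))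
  have hG : ContDiff ℝ (⊤ : ℕ∞) G := by
    have hs := contDiff_sweep hγsmooth e
    have hd : ContDiff ℝ (⊤ : ℕ∞) (fun z : ℂ => deriv γ z.re) :=
      (contDiff_infty_iff_deriv.1 hγsmooth).2.comp Complex.reCLM.contDiff
    exact hη.mul ((Complex.reCLM.contDiff.comp (contDiff_const.mul hd)).mul
      ((hχ.comp hs).mul (hf.comp hs)))
  have hGs : tsupport G ⊆ ball (t₀ : ℂ) δ :=
    (closure_mono (Function.support_mul_subset_left _ _)).trans hηs
  have hnear := contDiffAt_near hγsmooth he1 hδ hpos a b hG hGs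
  have hfar : ContDiffAt ℝ (⊤ : ℕ∞) (fun x => ∫ y in Ω, Real.log ‖x - y‖ * ((1 - χ y) * f y)) (γ t₀) := by
    refine contDiffAt_far hΩopen.measurableSet hΩbdd ((contDiff_const.sub hχ).mul hf)
      (half_pos hR) (fun y hy => ?_)
    rw [χ.one_of_mem_closedBall (ball_subset_closedBall hy), sub_self, zero_mul]
  have hsplit : (fun t => v (γ t)) = fun t => (1 / (2 * π)) *
      ((∫ z, (if 0 < z.im then a else b) * (Real.log ‖γ t - sweep γ e z‖ * G z)) +
        ∫ y in Ω, Real.log ‖γ t - y‖ * ((1 - χ y) * f y)) := by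
    ext1 t
    have h1 : ∫ y in Ω, Real.log ‖γ t - y‖ * (χ y * f y) =
        ∫ z, (if 0 < z.im then a else b) * (Real.log ‖γ t - sweep γ e z‖ * G z) := by
      rw [integral_eq_sweep hγsmooth hΩopen.measurableSet hinj hside hpos']
      · symm
        rw [← setIntegral_eq_integral_of_forall_compl_eq_zero (s := ball (t₀ : ℂ) δ)]
        · refine setIntegral_congr_fun measurableSet_ball fun z hz => ?_
          dsimp only [G]
          by_cases h : χ (sweep γ e z) = 0
          · simp only [h]; ring
          · rw [hη1 z hz h]; ring
        · intro z hz
          rw [image_eq_zero_of_notMem_tsupport (fun h => hz (hGs h))]; ring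
      · intro y hy
        have : χ y = 0 := by
          by_contra h
          exact hy (image_mono (ball_subset_ball (by linarith)) (hχ0 y h))
        simp only [this]; ring
    rw [hv, ← h1, ← integral_add (integrableOn_log_mul hΩbdd (hχ.mul hf).continuous _)
      (integrableOn_log_mul hΩbdd ((contDiff_const.sub hχ).mul hf).continuous _)]
    congr 2
    ext1 y
    ring
  rw [hsplit]
  exact contDiffAt_const.mul (hnear.add (hfar.comp t₀ hγsmooth.contDiffAt))
end
end

section
/- Let γ : ℝ → ℝ² be a closed smooth regular curve with image Γ and unit normal n(t) := (γ₂'(t), −γ₁'(t)), and let σ : ℝ → ℝ be continuous and L-periodic. Define the Laplace single-layer potential S[σ](x) := (1/(2π)) ∫_0^L log(1/‖x − γ(s)‖) · σ(s) ds for x ∈ ℝ². Then: (i) S[σ] is continuous on all of ℝ² (in particular its values across Γ do not jump); and (ii) for every t, the one-sided normal-derivative limits lim_{h→0⁺} ⟨∇S[σ](γ(t) + h·n(t)), n(t)⟩ and lim_{h→0⁺} ⟨∇S[σ](γ(t) − h·n(t)), n(t)⟩ exist and their difference equals −σ(t). -/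
/-!
Two uniform estimates on the curve carry everything. Since `γ (t + u) - γ t = u • G (t, u)` with `G`
continuous and nonvanishing on a compact set (injectivity for `u ≠ 0`, unit speed at `u = 0`), there
is `c > 0` with `c |u| ≤ ‖γ (t + u) - γ t‖` for all `t` and all `|u| ≤ L / 2`
(`curve_chord_lower`). For fixed `t`, Taylor's formula gives
`‖γ (t + u) - γ t - u • γ' t‖ ≤ C u ^ 2` (`curve_taylor`).

*Continuity.* The potential is a uniform limit of potentials with the continuous kernel
`log (max ‖x - γ s‖ ε)`. The error `log (max d ε) - log d` (`logGap`) is antitone in `d`. If `γ t` is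
a point of the curve nearest to `x`, then `‖x - γ (t + u)‖ ≥ (c / 2) |u|`, so the total error is at
most a constant times `∫ logGap ε ((c / 2) |u|) du`, which does not depend on `x` and tends to `0`.

*Jump.* Off the curve one differentiates under the integral sign. Write `w u = γ (t + u) - γ t`,
`β u = -⟪w u, n t⟫` and `q u = ‖w u‖ ^ 2`. At `x = γ t + h • n t` the normal derivative of
`∫ log ‖x - γ s‖ σ s` is the integral over `[-L / 2, L / 2]` of
`(h + β u) / (h ^ 2 + 2 h β u + q u) * σ (t + u)`. As `β = O(u ^ 2)`, `q = u ^ 2 + O(u ^ 3)` and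
`q ≥ c ^ 2 u ^ 2`, this kernel differs from the Poisson kernel `h / (u ^ 2 + h ^ 2)` by a quantity
that is bounded uniformly in small `h > 0` and converges pointwise to `β / q`. By dominated
convergence the limit as `h → 0⁺` is `π σ t + ∫ β / q σ` (`kernel_tendsto`). The limit from the
other side follows because the kernel is odd under `(h, β) ↦ (-h, -β)`: only the Poisson contribution
changes sign, so multiplying by `-1 / (2 π)` the difference is `-σ t`.
-/

open MeasureTheory Real Set Filter Topology

noncomputable section

open scoped Interval

/-! ### The Poisson kernel and its perturbations -/

/-- The Poisson kernel is an approximate identity of mass `π`. -/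
lemma poisson_tendsto {R : ℝ} (hR : 0 < R) {f : ℝ → ℝ} (hf : Continuous f) :
    Tendsto (fun h : ℝ => ∫ u in (-R)..R, h / (u ^ 2 + h ^ 2) * f u) (𝓝[>] 0) (𝓝 (π * f 0)) := by
  have h1 : ∫ x : ℝ, π⁻¹ * (1 + x ^ 2)⁻¹ = 1 := by
    rw [integral_const_mul, integral_univ_inv_one_add_sq, inv_mul_cancel₀ Real.pi_ne_zero]
  have h2 : Tendsto (fun x : ℝ => ‖x‖ ^ Module.finrank ℝ ℝ * (π⁻¹ * (1 + x ^ 2)⁻¹))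
      (Bornology.cobounded ℝ) (𝓝 0) := by
    have h3 : Tendsto (fun x : ℝ => π⁻¹ * ‖x‖⁻¹) (Bornology.cobounded ℝ) (𝓝 0) := by
      simpa using (tendsto_inv_atTop_zero.comp
        (tendsto_norm_cobounded_atTop (E := ℝ))).const_mul π⁻¹
    refine squeeze_zero' (Eventually.of_forall fun x => by positivity) ?_ h3
    filter_upwards [tendsto_norm_cobounded_atTop.eventually_gt_atTop (0 : ℝ)] with x hx
    have h4 : ‖x‖ * (1 + x ^ 2)⁻¹ ≤ ‖x‖⁻¹ := by
      rw [← div_eq_mul_inv, div_le_iff₀ (by positivity), inv_mul_eq_div, le_div_iff₀ hx]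
      rw [← sq, Real.norm_eq_abs, sq_abs]; linarith
    calc ‖x‖ ^ Module.finrank ℝ ℝ * (π⁻¹ * (1 + x ^ 2)⁻¹)
        = π⁻¹ * (‖x‖ * (1 + x ^ 2)⁻¹) := by simp; ring
      _ ≤ π⁻¹ * ‖x‖⁻¹ := by gcongr
  have hint : Integrable ((Ioc (-R) R).indicator f) :=
    (integrable_indicator_iff measurableSet_Ioc).2
      ((hf.integrableOn_Icc).mono_set Ioc_subset_Icc_self)
  have hnhds : Ioc (-R) R ∈ 𝓝 (0 : ℝ) := Ioc_mem_nhds (by linarith) hR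
  have hcont : ContinuousAt ((Ioc (-R) R).indicator f) 0 := by
    refine hf.continuousAt.congr ?_
    filter_upwards [hnhds] with x hx
    rw [indicator_of_mem hx]
  have key := (tendsto_integral_comp_smul_smul_of_integrable (μ := (volume : Measure ℝ))
    (φ := fun x : ℝ => π⁻¹ * (1 + x ^ 2)⁻¹) (fun x => by positivity) h1 h2 hint hcont).comp
    tendsto_inv_nhdsGT_zero
  rw [indicator_of_mem (mem_of_mem_nhds hnhds)] at key
  refine (key.const_mul π).congr' ?_
  filter_upwards [self_mem_nhdsWithin] with h hh
  have hh : 0 < h := hh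
  rw [intervalIntegral.integral_of_le (by linarith), ← integral_indicator measurableSet_Ioc]
  simp only [Function.comp]
  rw [← integral_const_mul]
  congr 1
  ext u
  by_cases hu : u ∈ Ioc (-R) R
  · rw [indicator_of_mem hu, indicator_of_mem hu]
    have : u ^ 2 + h ^ 2 ≠ 0 := by positivity
    have : 1 + (h⁻¹ * u) ^ 2 ≠ 0 := by positivity
    have e : (1 + (h⁻¹ * u) ^ 2) = (u ^ 2 + h ^ 2) / h ^ 2 := by field_simp; ring
    simp only [smul_eq_mul, Module.finrank_self, pow_one, e]
    field_simp
  · rw [indicator_of_notMem hu, indicator_of_notMem hu]; simp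

/-- The numerator of the difference is `h (u² - q) + β (u² - h²) = O((u² + h²)²)`, while the
perturbed denominator still dominates a multiple of `u² + h²`. -/
lemma kernel_sub_poisson_bound {C c h u β q : ℝ} (hC : 0 < C) (hc : 0 < c) (hh : 0 < h)
    (hhc : 4 * C * h ≤ c ^ 2) (hβ : |β| ≤ C * u ^ 2) (hq : |q - u ^ 2| ≤ 2 * C * |u| ^ 3)
    (hqc : c ^ 2 * u ^ 2 ≤ q) :
    |(h + β) / (h ^ 2 + 2 * h * β + q) - h / (u ^ 2 + h ^ 2)| ≤ 3 * C / min 1 (c ^ 2 / 2) := by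
  set m := min 1 (c ^ 2 / 2) with hm
  have hm0 : 0 < m := by positivity
  have hm1 : m ≤ 1 := min_le_left _ _
  have hm2 : m ≤ c ^ 2 / 2 := min_le_right _ _
  set P := u ^ 2 + h ^ 2 with hP
  have hP0 : 0 < P := by positivity
  obtain ⟨hβ1, hβ2⟩ := abs_le.1 hβ
  have hQ : m * P ≤ h ^ 2 + 2 * h * β + q := by
    have e1 : -(2 * h * (C * u ^ 2)) ≤ 2 * h * β := by nlinarith
    have e2 : 4 * C * h * u ^ 2 ≤ c ^ 2 * u ^ 2 := by gcongr
    have e3 : m * u ^ 2 ≤ c ^ 2 / 2 * u ^ 2 := by gcongr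
    have e4 : m * h ^ 2 ≤ 1 * h ^ 2 := by gcongr
    rw [hP]; nlinarith
  have hQ0 : 0 < h ^ 2 + 2 * h * β + q := lt_of_lt_of_le (by positivity) hQ
  have e : (h + β) / (h ^ 2 + 2 * h * β + q) - h / P
      = (h * (u ^ 2 - q) + β * (u ^ 2 - h ^ 2)) / ((h ^ 2 + 2 * h * β + q) * P) := by
    rw [div_sub_div _ _ hQ0.ne' hP0.ne', hP]
    congr 1
    ring
  have hnum : |h * (u ^ 2 - q) + β * (u ^ 2 - h ^ 2)| ≤ 3 * C * P ^ 2 := by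
    have a1 : |h * (u ^ 2 - q)| ≤ h * (2 * C * |u| ^ 3) := by
      rw [abs_mul, abs_of_pos hh, abs_sub_comm]; gcongr
    have a2 : |β * (u ^ 2 - h ^ 2)| ≤ C * u ^ 2 * P := by
      rw [abs_mul]
      have : |u ^ 2 - h ^ 2| ≤ P := by
        rw [abs_le, hP]; constructor <;> nlinarith [sq_nonneg u, sq_nonneg h]
      gcongr
    have a3 : h * |u| ≤ P := by
      rw [hP, ← sq_abs u]; nlinarith [sq_nonneg (h - |u|), sq_nonneg h, sq_nonneg |u|]
    have a4 : u ^ 2 ≤ P := by rw [hP]; nlinarith [sq_nonneg h]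
    have a5 : h * (2 * C * |u| ^ 3) = 2 * C * ((h * |u|) * u ^ 2) := by rw [← sq_abs u]; ring
    have a6 : (h * |u|) * u ^ 2 ≤ P * P := by gcongr
    have a7 : C * u ^ 2 * P ≤ C * P * P := by gcongr
    calc _ ≤ _ := abs_add_le _ _
      _ ≤ 2 * C * ((h * |u|) * u ^ 2) + C * u ^ 2 * P := by rw [← a5]; gcongr
      _ ≤ 2 * C * (P * P) + C * P * P := by gcongr
      _ = _ := by ring
  rw [e, abs_div, abs_of_pos (mul_pos hQ0 hP0), div_le_div_iff₀ (by positivity) hm0]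
  calc _ ≤ 3 * C * P ^ 2 * m := by gcongr
    _ = 3 * C * (m * P * P) := by ring
    _ ≤ _ := by gcongr

/-- One-sided limit of the double-layer type kernel: besides the regular part `β / q`, the
approximate identity hidden in the kernel contributes `π f 0`. -/
lemma kernel_tendsto {R C c : ℝ} (hR : 0 < R) (hC : 0 < C) (hc : 0 < c) {β q f : ℝ → ℝ}
    (hβc : Continuous β) (hqc : Continuous q) (hf : Continuous f)
    (hβ : ∀ u, |u| ≤ R → |β u| ≤ C * u ^ 2)
    (hq : ∀ u, |u| ≤ R → |q u - u ^ 2| ≤ 2 * C * |u| ^ 3)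
    (hqlow : ∀ u, |u| ≤ R → c ^ 2 * u ^ 2 ≤ q u) :
    Tendsto (fun h : ℝ => ∫ u in (-R)..R, (h + β u) / (h ^ 2 + 2 * h * β u + q u) * f u)
      (𝓝[>] 0) (𝓝 (π * f 0 + ∫ u in (-R)..R, β u / q u * f u)) := by
  have hmem : ∀ u, u ∈ Ι (-R) R → |u| ≤ R := by
    intro u hu
    rw [uIoc_of_le (by linarith)] at hu
    exact abs_le.2 ⟨hu.1.le, hu.2⟩
  have hsmall : ∀ᶠ h : ℝ in 𝓝[>] 0, 0 < h ∧ 4 * C * h ≤ c ^ 2 := by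
    have : Ioc (0 : ℝ) (c ^ 2 / (4 * C)) ∈ 𝓝[>] (0 : ℝ) := Ioc_mem_nhdsGT (by positivity)
    filter_upwards [this] with h hh
    refine ⟨hh.1, ?_⟩
    have := (le_div_iff₀ (by positivity)).1 hh.2
    linarith
  have hbd : ∀ᶠ h : ℝ in 𝓝[>] 0, ∀ u, u ∈ Ι (-R) R →
      ‖((h + β u) / (h ^ 2 + 2 * h * β u + q u) - h / (u ^ 2 + h ^ 2)) * f u‖
        ≤ 3 * C / min 1 (c ^ 2 / 2) * |f u| := by
    filter_upwards [hsmall] with h hh u hu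
    rw [norm_mul, Real.norm_eq_abs, Real.norm_eq_abs]
    gcongr
    exact kernel_sub_poisson_bound hC hc hh.1 hh.2 (hβ u (hmem u hu)) (hq u (hmem u hu))
      (hqlow u (hmem u hu))
  have hbi : IntervalIntegrable (fun u => 3 * C / min 1 (c ^ 2 / 2) * |f u|) volume (-R) R :=
    (continuous_const.mul hf.abs).intervalIntegrable _ _
  have hmeas : ∀ h : ℝ, Measurable (fun u =>
      ((h + β u) / (h ^ 2 + 2 * h * β u + q u) - h / (u ^ 2 + h ^ 2)) * f u) := by
    intro h
    have := hβc.measurable; have := hqc.measurable; have := hf.measurable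
    fun_prop
  have hD : Tendsto (fun h : ℝ => ∫ u in (-R)..R,
      ((h + β u) / (h ^ 2 + 2 * h * β u + q u) - h / (u ^ 2 + h ^ 2)) * f u)
      (𝓝[>] 0) (𝓝 (∫ u in (-R)..R, β u / q u * f u)) := by
    refine intervalIntegral.tendsto_integral_filter_of_dominated_convergence
      (fun u => 3 * C / min 1 (c ^ 2 / 2) * |f u|)
      (Eventually.of_forall fun h => (hmeas h).aestronglyMeasurable)
      (hbd.mono fun h hh => ae_of_all _ hh) hbi ?_
    filter_upwards [Measure.ae_ne volume (0 : ℝ)] with u hu0 hu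
    have hq0 : 0 < q u := lt_of_lt_of_le (by positivity) (hqlow u (hmem u hu))
    have hcont : ContinuousAt (fun h : ℝ =>
        ((h + β u) / (h ^ 2 + 2 * h * β u + q u) - h / (u ^ 2 + h ^ 2)) * f u) 0 := by
      refine ContinuousAt.mul (ContinuousAt.sub (ContinuousAt.div ?_ ?_ ?_)
        (ContinuousAt.div ?_ ?_ ?_)) continuousAt_const
      any_goals fun_prop
      · simpa using hq0.ne'
      · simpa using hu0
    have := hcont.tendsto.mono_left (nhdsWithin_le_nhds (s := Ioi 0))
    simpa using this
  refine ((poisson_tendsto hR hf).add hD).congr' ?_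
  filter_upwards [hbd, self_mem_nhdsWithin] with h hh hpos
  have hpos : 0 < h := hpos
  rw [← intervalIntegral.integral_add]
  · refine intervalIntegral.integral_congr fun u _ => ?_
    ring
  · refine Continuous.intervalIntegrable ?_ _ _
    refine Continuous.mul (Continuous.div (by fun_prop) (by fun_prop) fun u => ?_) hf
    positivity
  · refine hbi.mono_fun (hmeas h).aestronglyMeasurable ?_
    filter_upwards [ae_restrict_mem measurableSet_uIoc] with u hu
    exact (hh u hu).trans (le_abs_self _)

/-! ### Uniform geometry of the curve -/

lemma integral_period_eq_centered {f : ℝ → ℝ} {L : ℝ} (hf : Function.Periodic f L) (t : ℝ) :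
    ∫ s in (0:ℝ)..L, f s = ∫ u in (-(L / 2))..(L / 2), f (t + u) := by
  rw [intervalIntegral.integral_comp_add_left f t]
  have := hf.intervalIntegral_add_eq 0 (t + -(L / 2))
  rw [zero_add] at this
  rw [this]
  congr 1; ring

lemma eq_zero_of_curve_eq {γ : ℝ → ℂ} {L : ℝ} (hL : 0 < L) (hγper : Function.Periodic γ L)
    (hγinj : Set.InjOn γ (Set.Ico 0 L)) {t u : ℝ} (hu : |u| ≤ L / 2) (h : γ (t + u) = γ t) :
    u = 0 := by
  have hmod : ∀ x, γ (toIcoMod hL 0 x) = γ x := fun x => by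
    rw [toIcoMod]; exact hγper.sub_zsmul_eq _
  have hmem : ∀ x, toIcoMod hL 0 x ∈ Ico 0 L := fun x => by
    simpa using toIcoMod_mem_Ico hL 0 x
  have := hγinj (hmem (t + u)) (hmem t) (by rw [hmod, hmod, h])
  obtain ⟨k, hk⟩ := (toIcoMod_eq_toIcoMod hL).1 this
  have hk' : u = -(k * L) := by
    rw [zsmul_eq_mul] at hk; linarith
  rw [hk', abs_neg, abs_mul, abs_of_pos hL] at hu
  have hk1 : |(k : ℝ)| < 1 := by
    by_contra! hcon
    nlinarith
  have : k = 0 := by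
    rw [← Int.abs_lt_one_iff]; exact_mod_cast hk1
  simp [hk', this]

/-- Chord-arc estimate, with a constant independent of the base point. -/
lemma curve_chord_lower {γ : ℝ → ℂ} {L : ℝ} (hL : 0 < L)
    (hγ1 : ContDiff ℝ 1 γ) (hγper : Function.Periodic γ L)
    (hγinj : Set.InjOn γ (Set.Ico 0 L)) (hγunit : ∀ t : ℝ, ‖deriv γ t‖ = 1) :
    ∃ c > 0, ∀ t u : ℝ, |u| ≤ L / 2 → c * |u| ≤ ‖γ (t + u) - γ t‖ := by
  have hdc : Continuous (deriv γ) := hγ1.continuous_deriv le_rfl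
  -- The difference quotient, extended by `deriv γ t` to `u = 0`; as an average of the derivative
  -- over the parameter segment it is jointly continuous.
  set G : ℝ × ℝ → ℂ := fun p => ∫ r in (0:ℝ)..1, deriv γ (p.1 + r * p.2) with hG
  have hGc : Continuous G :=
    intervalIntegral.continuous_parametric_intervalIntegral_of_continuous'
      (f := fun (p : ℝ × ℝ) r => deriv γ (p.1 + r * p.2)) (by
        simp only [Function.uncurry_def]
        fun_prop) 0 1
  have hGeq : ∀ t u : ℝ, γ (t + u) - γ t = u • G (t, u) := by
    intro t u
    have h1 : ∫ x in t..(t + u), deriv γ x = γ (t + u) - γ t :=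
      intervalIntegral.integral_deriv_eq_sub
        (fun x _ => (hγ1.differentiable one_ne_zero).differentiableAt)
        (hdc.intervalIntegrable _ _)
    have h2 := intervalIntegral.smul_integral_comp_add_mul (a := 0) (b := 1) (deriv γ) u t
    simp only [hG]
    rw [← h1]
    simp only [mul_zero, add_zero, mul_one] at h2
    rw [← h2]
    simp only [mul_comm u]
  have hG0 : ∀ t u : ℝ, |u| ≤ L / 2 → G (t, u) ≠ 0 := by
    intro t u hu h0
    have h1 := hGeq t u
    rw [h0, smul_zero, sub_eq_zero] at h1
    have hu0 := eq_zero_of_curve_eq hL hγper hγinj hu h1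
    subst hu0
    have : G (t, 0) = deriv γ t := by simp [hG]
    have h3 := hγunit t
    rw [← this, h0, norm_zero] at h3
    exact zero_ne_one h3
  have hK : IsCompact (Icc (0:ℝ) L ×ˢ Icc (-(L / 2)) (L / 2)) := isCompact_Icc.prod isCompact_Icc
  obtain ⟨p, hp, hmin⟩ := hK.exists_isMinOn
    ⟨(0, 0), ⟨by constructor <;> simp [hL.le], by constructor <;> simp <;> linarith⟩⟩
    hGc.norm.continuousOn
  refine ⟨‖G p‖, norm_pos_iff.2 (hG0 p.1 p.2 (abs_le.2 hp.2)), fun t u hu => ?_⟩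
  obtain ⟨y, hy, hty⟩ : ∃ y ∈ Ico 0 L, ∀ v, γ (t + v) = γ (y + v) := by
    refine ⟨toIcoMod hL 0 t, by simpa using toIcoMod_mem_Ico hL 0 t, fun v => ?_⟩
    rw [toIcoMod, sub_add_eq_add_sub]
    exact (hγper.sub_zsmul_eq _).symm
  have ht0 : γ t = γ y := by simpa using hty 0
  rw [hty, ht0, hGeq, norm_smul, Real.norm_eq_abs, mul_comm]
  gcongr
  exact hmin (show (y, u) ∈ _ from ⟨⟨hy.1, hy.2.le⟩, abs_le.1 hu⟩)

lemma curve_taylor {γ : ℝ → ℂ} {R : ℝ} (hR : 0 < R) (hγ2 : ContDiff ℝ 2 γ) (t : ℝ) :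
    ∃ C > 0, ∀ u : ℝ, |u| ≤ R → ‖γ (t + u) - γ t - u • deriv γ t‖ ≤ C * u ^ 2 := by
  have hd : ContDiff ℝ 1 (deriv γ) := ((contDiff_succ_iff_deriv (n := 1)).1 hγ2).2.2
  have hdd : Continuous (deriv (deriv γ)) := hd.continuous_deriv le_rfl
  have hγd : Differentiable ℝ γ := hγ2.differentiable (by simp)
  obtain ⟨C, hC⟩ := (isCompact_Icc (a := t - R) (b := t + R)).exists_bound_of_continuousOn
    hdd.continuousOn
  refine ⟨max C 1, by positivity, fun u hu => ?_⟩
  have hlip : ∀ v, |v| ≤ |u| → ‖deriv γ (t + v) - deriv γ t‖ ≤ max C 1 * |u| := by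
    intro v hv
    have := (convex_Icc (t - R) (t + R)).norm_image_sub_le_of_norm_deriv_le
      (f := deriv γ) (C := max C 1) (x := t) (y := t + v)
      (fun x _ => (hd.differentiable one_ne_zero).differentiableAt)
      (fun x hx => (hC x hx).trans (le_max_left _ _))
      (by constructor <;> linarith) (by
        have := abs_le.1 (hv.trans hu); constructor <;> linarith)
    refine this.trans ?_
    rw [add_sub_cancel_left, Real.norm_eq_abs]
    gcongr
  have hda : ∀ v, HasDerivAt (fun v : ℝ => γ (t + v) - v • deriv γ t)
      (deriv γ (t + v) - deriv γ t) v := by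
    intro v
    have h1 := ((hγd (t + v)).hasDerivAt).comp_const_add t v
    have h2 := (hasDerivAt_id v).smul_const (deriv γ t)
    have h3 := h1.sub h2
    rw [one_smul] at h3
    exact h3
  have := (convex_Icc (-|u|) |u|).norm_image_sub_le_of_norm_hasDerivWithin_le
      (f := fun v : ℝ => γ (t + v) - v • deriv γ t) (C := max C 1 * |u|) (x := 0) (y := u)
      (fun x _ => (hda x).hasDerivWithinAt) (fun x hx => hlip x (abs_le.2 hx))
      (abs_le.1 (by simp)) (abs_le.1 le_rfl)
  simp only [add_zero, zero_smul, sub_zero, Real.norm_eq_abs] at this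
  rw [sub_right_comm]
  refine this.trans (le_of_eq ?_)
  rw [mul_assoc, ← sq, sq_abs]

/-! ### Continuity of the potential -/

/-- Error made when the distance `d` is replaced by `max d ε` inside the
logarithm. For `d = 0` it takes the junk value `log ε` (if `ε > 0`), which
matters only on a null set. -/
def logGap (ε d : ℝ) : ℝ := log (max d ε) - log d

lemma logGap_nonneg {ε d : ℝ} (hd : 0 < d) : 0 ≤ logGap ε d :=
  sub_nonneg.2 (Real.log_le_log hd (le_max_left _ _))

lemma logGap_anti {ε d d' : ℝ} (hd : 0 < d) (hdd' : d ≤ d') : logGap ε d' ≤ logGap ε d := by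
  have hd' : 0 < d' := hd.trans_le hdd'
  unfold logGap
  rcases le_total ε d' with h | h
  · rw [max_eq_left h, sub_self]
    exact logGap_nonneg hd
  · rw [max_eq_right h, max_eq_right (hdd'.trans h)]
    gcongr

lemma logGap_mono {ε ε' d : ℝ} (hd : 0 < d) (h : ε ≤ ε') : logGap ε d ≤ logGap ε' d := by
  unfold logGap
  have : 0 < max d ε := lt_max_of_lt_left hd
  gcongr

lemma continuous_log_max {X : Type*} [TopologicalSpace X] {f : X → ℝ} (hf : Continuous f) {ε : ℝ}
    (hε : 0 < ε) : Continuous fun x => log (max (f x) ε) :=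
  (hf.max continuous_const).log fun _ => (lt_max_of_lt_right hε).ne'

lemma intervalIntegrable_logGap {ε a R : ℝ} (hε : 0 < ε) (ha : 0 < a) :
    IntervalIntegrable (fun u : ℝ => logGap ε (a * |u|)) volume (-R) R := by
  unfold logGap
  refine IntervalIntegrable.sub
    ((continuous_log_max (by fun_prop) hε).intervalIntegrable _ _) ?_
  have h1 : IntervalIntegrable (fun u : ℝ => log a + log u) volume (-R) R :=
    intervalIntegrable_const.add intervalIntegral.intervalIntegrable_log'
  refine h1.congr_ae ?_
  filter_upwards [ae_restrict_of_ae (Measure.ae_ne volume (0 : ℝ))] with u hu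
  rw [Real.log_mul ha.ne' (abs_ne_zero.2 hu), Real.log_abs]

lemma tendsto_integral_logGap {a R : ℝ} (ha : 0 < a) :
    Tendsto (fun ε : ℝ => ∫ u in (-R)..R, logGap ε (a * |u|)) (𝓝[>] 0) (𝓝 0) := by
  have h : Tendsto (fun ε : ℝ => ∫ u in (-R)..R, logGap ε (a * |u|)) (𝓝[>] 0)
      (𝓝 (∫ u in (-R)..R, (0 : ℝ))) := by
    refine intervalIntegral.tendsto_integral_filter_of_dominated_convergence
      (fun u => logGap 1 (a * |u|)) ?_ ?_ (intervalIntegrable_logGap one_pos ha) ?_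
    · refine Eventually.of_forall fun ε => Measurable.aestronglyMeasurable ?_
      unfold logGap
      fun_prop
    · filter_upwards [Ioc_mem_nhdsGT (zero_lt_one' ℝ)] with ε hε
      filter_upwards [Measure.ae_ne volume (0 : ℝ)] with u hu _
      have : 0 < a * |u| := by positivity
      rw [Real.norm_eq_abs, abs_of_nonneg (logGap_nonneg this)]
      exact logGap_mono this hε.2
    · filter_upwards [Measure.ae_ne volume (0 : ℝ)] with u hu _
      have : 0 < a * |u| := by positivity
      refine tendsto_const_nhds.congr' ?_
      filter_upwards [Ioc_mem_nhdsGT this] with ε hε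
      rw [logGap, max_eq_left hε.2, sub_self]
  simpa using h

lemma exists_nearest {γ : ℝ → ℂ} {L : ℝ} (hL : 0 < L) (hγc : Continuous γ)
    (hγper : Function.Periodic γ L) (x : ℂ) : ∃ t, ∀ s, ‖x - γ t‖ ≤ ‖x - γ s‖ := by
  obtain ⟨t, -, ht⟩ := (isCompact_Icc (a := (0:ℝ)) (b := L)).exists_isMinOn
    ⟨0, by simp [hL.le]⟩ (f := fun s => ‖x - γ s‖) (by fun_prop)
  refine ⟨t, fun s => ?_⟩
  obtain ⟨y, hy, hys⟩ := hγper.exists_mem_Ico₀ hL s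
  rw [hys]
  exact ht ⟨hy.1, hy.2.le⟩

/-- Up to a shift of parameter depending on `x`, the distance from `x` to the curve is bounded
below by a fixed multiple of `|u|`: shift to the nearest point `γ t`, for which
`‖γ (t + u) - γ t‖ ≤ 2 ‖x - γ (t + u)‖`. -/
lemma exists_shift_lower {γ : ℝ → ℂ} {L c : ℝ} (hL : 0 < L) (hγc : Continuous γ)
    (hγper : Function.Periodic γ L)
    (hlow : ∀ t u : ℝ, |u| ≤ L / 2 → c * |u| ≤ ‖γ (t + u) - γ t‖) (x : ℂ) :
    ∃ t, ∀ u, |u| ≤ L / 2 → c / 2 * |u| ≤ ‖x - γ (t + u)‖ := by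
  obtain ⟨t, ht⟩ := exists_nearest hL hγc hγper x
  refine ⟨t, fun u hu => ?_⟩
  have h1 := hlow t u hu
  have h2 := ht (t + u)
  have h3 : ‖γ (t + u) - γ t‖ ≤ ‖x - γ t‖ + ‖x - γ (t + u)‖ := by
    rw [← norm_neg (x - γ (t + u))]
    refine le_trans (le_of_eq ?_) (norm_add_le _ _)
    congr 1; ring
  linarith

/-- Continuity by uniform approximation with truncated kernels. -/
lemma continuous_logPotential {γ : ℝ → ℂ} {L c : ℝ} (hL : 0 < L) (hγc : Continuous γ)
    (hγper : Function.Periodic γ L) (hc : 0 < c)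
    (hlow : ∀ t u : ℝ, |u| ≤ L / 2 → c * |u| ≤ ‖γ (t + u) - γ t‖)
    {σ : ℝ → ℝ} (hσc : Continuous σ) (hσper : Function.Periodic σ L) :
    Continuous fun x : ℂ => ∫ s in (0:ℝ)..L, log ‖x - γ s‖ * σ s := by
  obtain ⟨M, hM⟩ : ∃ M, ∀ s, |σ s| ≤ M := by
    obtain ⟨M, hM⟩ := (isCompact_Icc (a := (0:ℝ)) (b := L)).exists_bound_of_continuousOn
      hσc.continuousOn
    refine ⟨M, fun s => ?_⟩
    obtain ⟨y, hy, hys⟩ := hσper.exists_mem_Ico₀ hL s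
    rw [hys]
    exact hM y ⟨hy.1, hy.2.le⟩
  have hM0 : 0 ≤ M := (abs_nonneg _).trans (hM 0)
  have hmem : ∀ u, u ∈ Ι (-(L / 2)) (L / 2) → |u| ≤ L / 2 := by
    intro u hu
    rw [uIoc_of_le (by linarith)] at hu
    exact abs_le.2 ⟨hu.1.le, hu.2⟩
  refine continuous_of_uniform_approx_of_continuous fun V hV => ?_
  obtain ⟨e, he, heV⟩ := Metric.mem_uniformity_dist.1 hV
  have hsmall : ∀ᶠ ε : ℝ in 𝓝[>] 0,
      (∫ u in (-(L / 2))..(L / 2), logGap ε (c / 2 * |u|)) * M < e := by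
    have := (tendsto_integral_logGap (a := c / 2) (R := L / 2) (by positivity)).mul_const M
    rw [zero_mul] at this
    exact this.eventually_lt_const he
  obtain ⟨ε, hε, hεpos⟩ := (hsmall.and self_mem_nhdsWithin).exists
  have hεpos : 0 < ε := hεpos
  refine ⟨fun x => ∫ s in (0:ℝ)..L, log (max ‖x - γ s‖ ε) * σ s, ?_, fun x => heV ?_⟩
  · refine intervalIntegral.continuous_parametric_intervalIntegral_of_continuous'
      (f := fun (x : ℂ) s => log (max ‖x - γ s‖ ε) * σ s) ?_ 0 L
    simp only [Function.uncurry_def]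
    exact (continuous_log_max (by fun_prop) hεpos).mul (by fun_prop)
  obtain ⟨t, ht⟩ := exists_shift_lower hL hγc hγper hlow x
  have hgap : ∀ᵐ u, u ∈ Ι (-(L / 2)) (L / 2) →
      ‖logGap ε ‖x - γ (t + u)‖ * σ (t + u)‖ ≤ logGap ε (c / 2 * |u|) * M := by
    filter_upwards [Measure.ae_ne volume (0 : ℝ)] with u hu hu'
    have h1 : 0 < c / 2 * |u| := by positivity
    have h2 := ht u (hmem u hu')
    have h3 := logGap_nonneg (ε := ε) (h1.trans_le h2)
    rw [norm_mul, Real.norm_eq_abs, Real.norm_eq_abs, abs_of_nonneg h3]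
    exact mul_le_mul (logGap_anti h1 h2) (hM _) (abs_nonneg _) (logGap_nonneg h1)
  have hbi := (intervalIntegrable_logGap (R := L / 2) hεpos (half_pos hc)).mul_const M
  have hgi : IntervalIntegrable (fun u => logGap ε ‖x - γ (t + u)‖ * σ (t + u)) volume
      (-(L / 2)) (L / 2) := by
    refine hbi.mono_fun (Measurable.aestronglyMeasurable ?_) ?_
    · unfold logGap
      have := hγc.measurable; have := hσc.measurable
      fun_prop
    · filter_upwards [(ae_restrict_iff' measurableSet_uIoc).2 hgap] with u hu
      exact hu.trans (le_abs_self _)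
  have hmi : IntervalIntegrable (fun u => log (max ‖x - γ (t + u)‖ ε) * σ (t + u)) volume
      (-(L / 2)) (L / 2) :=
    ((continuous_log_max (by fun_prop) hεpos).mul (by fun_prop)).intervalIntegrable _ _
  beta_reduce
  rw [integral_period_eq_centered (f := fun s => log ‖x - γ s‖ * σ s)
      (fun s => by simp only [hγper s, hσper s]) t,
    integral_period_eq_centered (f := fun s => log (max ‖x - γ s‖ ε) * σ s)
      (fun s => by simp only [hγper s, hσper s]) t, dist_comm, Real.dist_eq]
  have hdiff : (∫ u in (-(L / 2))..(L / 2), log (max ‖x - γ (t + u)‖ ε) * σ (t + u)) -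
      ∫ u in (-(L / 2))..(L / 2), log ‖x - γ (t + u)‖ * σ (t + u)
      = ∫ u in (-(L / 2))..(L / 2), logGap ε ‖x - γ (t + u)‖ * σ (t + u) := by
    have h1 : (∫ u in (-(L / 2))..(L / 2), log ‖x - γ (t + u)‖ * σ (t + u))
      = ∫ u in (-(L / 2))..(L / 2), (log (max ‖x - γ (t + u)‖ ε) * σ (t + u)
          - logGap ε ‖x - γ (t + u)‖ * σ (t + u)) := by
      refine intervalIntegral.integral_congr fun u _ => ?_
      simp only [logGap]; ring
    rw [h1, intervalIntegral.integral_sub hmi hgi]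
    ring
  rw [hdiff]
  refine lt_of_le_of_lt ?_ hε
  rw [← intervalIntegral.integral_mul_const]
  exact intervalIntegral.norm_integral_le_of_norm_le (by linarith) (by
    filter_upwards [hgap] with u hu hu'
    exact hu (by rwa [uIoc_of_le (by linarith)])) hbi

/-! ### The gradient off the curve -/

lemma hasFDerivAt_log_norm {z : ℂ} (hz : z ≠ 0) (a : ℂ) (x : ℂ) (hx : x - a = z) :
    HasFDerivAt (fun x : ℂ => log ‖x - a‖) ((‖z‖ ^ 2)⁻¹ • innerSL ℝ z) x := by
  subst hx
  have h1 := ((hasFDerivAt_id x).sub_const a).norm_sq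
  have h2 := (h1.log (by simpa using hz)).const_mul (1 / 2 : ℝ)
  have h3 : (fun x : ℂ => log ‖x - a‖) = fun x => 1 / 2 * log (‖id x - a‖ ^ 2) := by
    ext y; simp [Real.log_pow]
  have h4 : (‖x - a‖ ^ 2)⁻¹ • innerSL ℝ (x - a) = (1 / 2 : ℝ) • (‖id x - a‖ ^ 2)⁻¹ •
      2 • (innerSL ℝ (id x - a)) ∘SL ContinuousLinearMap.id ℝ ℂ := by
    ext v
    simp
    ring
  rw [h3, h4]
  exact h2

lemma continuous_gradient_kernel {γ : ℝ → ℂ} (hγc : Continuous γ) {σ : ℝ → ℝ}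
    (hσc : Continuous σ) {x : ℂ} (hx : ∀ s, x - γ s ≠ 0) :
    Continuous fun s => σ s • ((‖x - γ s‖ ^ 2)⁻¹ • innerSL ℝ (x - γ s)) := by
  have h1 : Continuous fun s => x - γ s := continuous_const.sub hγc
  have h2 : Continuous fun s => (‖x - γ s‖ ^ 2)⁻¹ :=
    (h1.norm.pow 2).inv₀ fun s => pow_ne_zero _ (norm_ne_zero_iff.2 (hx s))
  have h3 : Continuous fun s => innerSL ℝ (x - γ s) := (innerSL ℝ (E := ℂ)).continuous.comp h1
  exact hσc.smul (h2.smul h3)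

lemma hasFDerivAt_logPotential {γ : ℝ → ℂ} {L : ℝ} (hL : 0 < L) (hγc : Continuous γ)
    (hγper : Function.Periodic γ L) {σ : ℝ → ℝ} (hσc : Continuous σ) {x : ℂ}
    (hx : ∀ s, x ≠ γ s) :
    HasFDerivAt (fun x : ℂ => ∫ s in (0:ℝ)..L, log ‖x - γ s‖ * σ s)
      (∫ s in (0:ℝ)..L, σ s • ((‖x - γ s‖ ^ 2)⁻¹ • innerSL ℝ (x - γ s))) x := by
  obtain ⟨t, ht⟩ := exists_nearest hL hγc hγper x
  set r := ‖x - γ t‖ with hr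
  have hr0 : 0 < r := norm_pos_iff.2 (sub_ne_zero.2 (hx t))
  have hball : ∀ y ∈ Metric.ball x (r / 2), ∀ s, r / 2 ≤ ‖y - γ s‖ := by
    intro y hy s
    rw [Metric.mem_ball, dist_eq_norm, ← norm_neg] at hy
    have h1 : ‖x - γ s‖ ≤ ‖-(y - x)‖ + ‖y - γ s‖ := by
      refine le_trans (le_of_eq ?_) (norm_add_le _ _)
      congr 1; ring
    linarith [ht s]
  have hxb : x ∈ Metric.ball x (r / 2) := Metric.mem_ball_self (by positivity)
  have hne : ∀ y ∈ Metric.ball x (r / 2), ∀ s, y - γ s ≠ 0 := fun y hy s =>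
    norm_pos_iff.1 (lt_of_lt_of_le (by positivity) (hball y hy s))
  refine intervalIntegral.hasFDerivAt_integral_of_dominated_of_fderiv_le
    (F := fun (x : ℂ) s => log ‖x - γ s‖ * σ s)
    (F' := fun x s => σ s • ((‖x - γ s‖ ^ 2)⁻¹ • innerSL ℝ (x - γ s)))
    (bound := fun s => |σ s| * (r / 2)⁻¹)
    (Metric.ball_mem_nhds x (by positivity : 0 < r / 2)) ?_ ?_ ?_ ?_ ?_ ?_
  · refine Eventually.of_forall fun y => Measurable.aestronglyMeasurable ?_
    have := hγc.measurable; have := hσc.measurable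
    fun_prop
  · refine Continuous.intervalIntegrable (Continuous.mul (Continuous.log (by fun_prop) ?_) hσc) _ _
    exact fun s => norm_ne_zero_iff.2 (hne x hxb s)
  · exact (continuous_gradient_kernel hγc hσc (hne x hxb)).aestronglyMeasurable
  · refine ae_of_all _ fun s _ y hy => ?_
    have h1 := hball y hy s
    have h2 : 0 < ‖y - γ s‖ := lt_of_lt_of_le (by positivity) h1
    rw [norm_smul, norm_smul, innerSL_apply_norm, Real.norm_eq_abs, norm_inv, norm_pow, norm_norm]
    gcongr
    rw [sq, mul_inv, mul_assoc, inv_mul_cancel₀ h2.ne', mul_one]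
    gcongr
  · exact Continuous.intervalIntegrable (by fun_prop) _ _
  · refine ae_of_all _ fun s _ y hy => ?_
    exact (hasFDerivAt_log_norm (hne y hy s) (γ s) y rfl).mul_const (σ s)

lemma fderiv_logPotential_apply {γ : ℝ → ℂ} {L : ℝ} (hL : 0 < L) (hγc : Continuous γ)
    (hγper : Function.Periodic γ L) {σ : ℝ → ℝ} (hσc : Continuous σ) {x : ℂ}
    (hx : ∀ s, x ≠ γ s) (v : ℂ) :
    fderiv ℝ (fun x : ℂ => ∫ s in (0:ℝ)..L, log ‖x - γ s‖ * σ s) x v =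
      ∫ s in (0:ℝ)..L, inner ℝ (x - γ s) v / ‖x - γ s‖ ^ 2 * σ s := by
  rw [(hasFDerivAt_logPotential hL hγc hγper hσc hx).fderiv,
    ContinuousLinearMap.intervalIntegral_apply]
  · refine intervalIntegral.integral_congr fun s _ => ?_
    simp only [smul_apply, innerSL_apply_apply, smul_eq_mul]
    ring
  · exact (continuous_gradient_kernel hγc hσc fun s =>
      sub_ne_zero.2 (hx s)).intervalIntegrable _ _

/-! ### The normal derivative along the normal line -/

lemma exists_centered_eq {γ : ℝ → ℂ} {L : ℝ} (hL : 0 < L) (hγper : Function.Periodic γ L)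
    (t s : ℝ) : ∃ u, |u| ≤ L / 2 ∧ γ s = γ (t + u) := by
  obtain ⟨y, hy, hys⟩ := hγper.exists_mem_Ico hL s (t - L / 2)
  exact ⟨y - t, abs_le.2 ⟨by linarith [hy.1], by linarith [hy.2]⟩, by rw [hys]; congr 1; ring⟩

/-- Short normal segments based at `γ t` meet the curve only at `γ t`: a crossing `h ν = w u` would
give `|h| = |⟪w u, ν⟫| ≤ C u ^ 2` and `c |u| ≤ |h|`. -/
lemma normal_offset_ne {γ : ℝ → ℂ} {L c C : ℝ} (hL : 0 < L) (hγper : Function.Periodic γ L)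
    (hc : 0 < c) (hC : 0 < C) {t : ℝ} {ν : ℂ} (hν : ‖ν‖ = 1)
    (hlow : ∀ u : ℝ, |u| ≤ L / 2 → c * |u| ≤ ‖γ (t + u) - γ t‖)
    (hβ : ∀ u : ℝ, |u| ≤ L / 2 → |inner ℝ (γ (t + u) - γ t) ν| ≤ C * u ^ 2)
    {h : ℝ} (h0 : h ≠ 0) (hh : C * |h| < c ^ 2) (s : ℝ) : γ t + h • ν ≠ γ s := by
  intro heq
  obtain ⟨u, hu, hsu⟩ := exists_centered_eq hL hγper t s
  have hw : γ (t + u) - γ t = h • ν := by rw [← hsu, ← heq]; ring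
  have h1 := hlow u hu
  have h2 := hβ u hu
  rw [hw, norm_smul, hν, mul_one, Real.norm_eq_abs] at h1
  rw [hw, real_inner_smul_left, real_inner_self_eq_norm_sq, hν, one_pow, mul_one] at h2
  have h3 : 0 < |h| := abs_pos.2 h0
  have h4 : (c * |u|) ^ 2 ≤ |h| ^ 2 := by gcongr
  rw [mul_pow, sq_abs] at h4
  have h5 : c ^ 2 * |h| ≤ C * |h| * |h| := by
    calc c ^ 2 * |h| ≤ c ^ 2 * (C * u ^ 2) := by gcongr
      _ = C * (c ^ 2 * u ^ 2) := by ring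
      _ ≤ C * |h| ^ 2 := by gcongr
      _ = _ := by ring
  nlinarith

lemma normal_derivative_logPotential {γ : ℝ → ℂ} {L : ℝ} (hL : 0 < L) (hγc : Continuous γ)
    (hγper : Function.Periodic γ L) {σ : ℝ → ℝ} (hσc : Continuous σ)
    (hσper : Function.Periodic σ L) {t : ℝ} {ν : ℂ} (hν : ‖ν‖ = 1) {h : ℝ}
    (hx : ∀ s, γ t + h • ν ≠ γ s) :
    fderiv ℝ (fun x : ℂ => ∫ s in (0:ℝ)..L, log ‖x - γ s‖ * σ s) (γ t + h • ν) ν =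
      ∫ u in (-(L / 2))..(L / 2), (h + -inner ℝ (γ (t + u) - γ t) ν) /
        (h ^ 2 + 2 * h * (-inner ℝ (γ (t + u) - γ t) ν) + ‖γ (t + u) - γ t‖ ^ 2) * σ (t + u) := by
  rw [fderiv_logPotential_apply hL hγc hγper hσc hx, integral_period_eq_centered
    (f := fun s => inner ℝ (γ t + h • ν - γ s) ν / ‖γ t + h • ν - γ s‖ ^ 2 * σ s)
    (fun s => by simp only [hγper s, hσper s]) t]
  refine intervalIntegral.integral_congr fun u _ => ?_
  have e : γ t + h • ν - γ (t + u) = h • ν - (γ (t + u) - γ t) := by ring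
  simp only [e]
  rw [norm_sub_sq_real, inner_sub_left, real_inner_smul_left, real_inner_smul_left,
    real_inner_self_eq_norm_sq, norm_smul, mul_pow, Real.norm_eq_abs, sq_abs, hν,
    real_inner_comm (γ (t + u) - γ t) ν]
  congr 2 <;> ring

/-- The Laplace single-layer potential of a continuous `L`-periodic
density `σ` on a closed smooth regular curve `γ` with unit normal
`n(t) = (γ₂'(t), -γ₁'(t))` (i.e. `-i·γ'(t)` in `ℂ`) is continuous on all of `ℝ² ≅ ℂ`, and
its one-sided normal derivatives exist on the curve with jump `-σ(t)`. -/
theorem singleLayer_continuity_and_normal_derivative_jump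
    (γ : ℝ → ℂ) (L : ℝ) (hL : 0 < L)
    (hγsmooth : ContDiff ℝ (⊤ : ℕ∞) γ) (hγper : Function.Periodic γ L)
    (hγinj : Set.InjOn γ (Set.Ico 0 L)) (hγunit : ∀ t : ℝ, ‖deriv γ t‖ = 1)
    (n : ℝ → ℂ) (hn : ∀ t : ℝ, n t = -Complex.I * deriv γ t)
    (σ : ℝ → ℝ) (hσc : Continuous σ) (hσper : Function.Periodic σ L)
    (S : ℂ → ℝ)
    (hS : ∀ x : ℂ, S x = (1 / (2 * π)) *
      ∫ s in (0:ℝ)..L, Real.log (1 / ‖x - γ s‖) * σ s) :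
    Continuous S ∧
    ∀ t : ℝ, ∃ A B : ℝ,
      Filter.Tendsto (fun h : ℝ => fderiv ℝ S (γ t + h • n t) (n t)) (𝓝[>] 0) (𝓝 A) ∧
      Filter.Tendsto (fun h : ℝ => fderiv ℝ S (γ t - h • n t) (n t)) (𝓝[>] 0) (𝓝 B) ∧
      A - B = -σ t := by
  have hγ2 : ContDiff ℝ 2 γ := contDiff_infty.1 hγsmooth 2
  have hγ1 : ContDiff ℝ 1 γ := hγ2.of_le (by norm_num)
  have hγc : Continuous γ := hγ1.continuous
  obtain ⟨c, hc, hlow⟩ := curve_chord_lower hL hγ1 hγper hγinj hγunit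
  set I : ℂ → ℝ := fun x => ∫ s in (0:ℝ)..L, log ‖x - γ s‖ * σ s with hI
  have hSI : S = fun x => -(1 / (2 * π)) * I x := by
    ext x
    rw [hS, hI, neg_mul, ← mul_neg, ← intervalIntegral.integral_neg]
    simp only [one_div, Real.log_inv, neg_mul]
  refine ⟨?_, fun t => ?_⟩
  · rw [hSI]
    exact continuous_const.mul (continuous_logPotential hL hγc hγper hc hlow hσc hσper)
  set R := L / 2 with hR
  have hR0 : 0 < R := half_pos hL
  obtain ⟨C, hC, htay⟩ := curve_taylor hR0 hγ2 t
  have hν : ‖n t‖ = 1 := by rw [hn, norm_mul, hγunit]; simp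
  have horth : inner ℝ (deriv γ t) (n t) = 0 := by
    rw [hn, Complex.inner]; simp; ring
  have hβ : ∀ u : ℝ, |u| ≤ R → |inner ℝ (γ (t + u) - γ t) (n t)| ≤ C * u ^ 2 := by
    intro u hu
    have e : inner ℝ (γ (t + u) - γ t) (n t)
        = inner ℝ (γ (t + u) - γ t - u • deriv γ t) (n t) := by
      rw [inner_sub_left (γ (t + u) - γ t), real_inner_smul_left, horth]; simp
    rw [e]
    refine (abs_real_inner_le_norm _ _).trans ?_
    rw [hν, mul_one]
    exact htay u hu
  have hup : ∀ u : ℝ, ‖γ (t + u) - γ t‖ ≤ |u| := by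
    intro u
    have := convex_univ.norm_image_sub_le_of_norm_deriv_le (f := γ) (C := 1)
      (fun x _ => (hγ1.differentiable one_ne_zero).differentiableAt)
      (fun x _ => (hγunit x).le) (mem_univ t) (mem_univ (t + u))
    simpa using this
  have hq : ∀ u : ℝ, |u| ≤ R → |‖γ (t + u) - γ t‖ ^ 2 - u ^ 2| ≤ 2 * C * |u| ^ 3 := by
    intro u hu
    have h1 : |‖γ (t + u) - γ t‖ - (|u|)| ≤ C * u ^ 2 := by
      have := abs_norm_sub_norm_le (γ (t + u) - γ t) (u • deriv γ t)
      rw [norm_smul, hγunit, mul_one, Real.norm_eq_abs] at this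
      exact this.trans (htay u hu)
    have h2 : ‖γ (t + u) - γ t‖ ^ 2 - u ^ 2
        = (‖γ (t + u) - γ t‖ - |u|) * (‖γ (t + u) - γ t‖ + |u|) := by
      rw [← sq_abs u]; ring
    rw [h2, abs_mul, abs_of_nonneg (a := ‖γ (t + u) - γ t‖ + |u|) (by positivity)]
    calc _ ≤ C * u ^ 2 * (|u| + |u|) := by gcongr; exact hup u
      _ = _ := by rw [← sq_abs u]; ring
  have hqlow : ∀ u : ℝ, |u| ≤ R → c ^ 2 * u ^ 2 ≤ ‖γ (t + u) - γ t‖ ^ 2 := by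
    intro u hu
    rw [← sq_abs u, ← mul_pow]
    have := hlow t u hu
    gcongr
  set β : ℝ → ℝ := fun u => -inner ℝ (γ (t + u) - γ t) (n t) with hβdef
  have hwc : Continuous fun u => γ (t + u) - γ t := by fun_prop
  have hβc : Continuous β := (hwc.inner continuous_const).neg
  have hfc : Continuous fun u => σ (t + u) := by fun_prop
  have hformula : ∀ h : ℝ, h ≠ 0 → C * |h| < c ^ 2 → fderiv ℝ S (γ t + h • n t) (n t)
      = -(1 / (2 * π)) * ∫ u in (-R)..R, (h + β u) /
        (h ^ 2 + 2 * h * β u + ‖γ (t + u) - γ t‖ ^ 2) * σ (t + u) := by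
    intro h h0 hh
    have hx := normal_offset_ne hL hγper hc hC hν (hlow t) hβ h0 hh
    rw [hSI, fderiv_const_mul (hasFDerivAt_logPotential hL hγc hγper hσc hx).differentiableAt,
      smul_apply, smul_eq_mul,
      normal_derivative_logPotential hL hγc hγper hσc hσper hν hx]
  have hsmall : ∀ᶠ h : ℝ in 𝓝[>] 0, 0 < h ∧ C * |h| < c ^ 2 := by
    have : Ioo (0 : ℝ) (c ^ 2 / C) ∈ 𝓝[>] (0 : ℝ) := Ioo_mem_nhdsGT (by positivity)
    filter_upwards [this] with h hh
    refine ⟨hh.1, ?_⟩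
    have := (lt_div_iff₀ hC).1 hh.2
    rw [abs_of_pos hh.1]; linarith
  have hqc : Continuous fun u => ‖γ (t + u) - γ t‖ ^ 2 := hwc.norm.pow 2
  have hβ' : ∀ u : ℝ, |u| ≤ R → |β u| ≤ C * u ^ 2 := fun u hu => by
    rw [hβdef, abs_neg]; exact hβ u hu
  have hplus := kernel_tendsto (β := β) (q := fun u => ‖γ (t + u) - γ t‖ ^ 2)
    (f := fun u => σ (t + u)) hR0 hC hc hβc hqc hfc hβ' hq hqlow
  -- With `-h` in place of `h` the kernel is minus the kernel of `(h, -β)`.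
  have hminus := kernel_tendsto (β := fun u => -β u) (q := fun u => ‖γ (t + u) - γ t‖ ^ 2)
    (f := fun u => σ (t + u)) hR0 hC hc hβc.neg hqc hfc
    (fun u hu => by rw [abs_neg]; exact hβ' u hu) hq hqlow
  refine ⟨_, _, (hplus.const_mul (-(1 / (2 * π)))).congr' ?_,
    (hminus.const_mul (1 / (2 * π))).congr' ?_, ?_⟩
  · filter_upwards [hsmall] with h hh
    exact (hformula h hh.1.ne' hh.2).symm
  · filter_upwards [hsmall] with h hh
    have h1 := hformula (-h) (neg_ne_zero.2 hh.1.ne') (by rw [abs_neg]; exact hh.2)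
    rw [neg_smul, ← sub_eq_add_neg] at h1
    rw [h1, neg_mul, ← mul_neg, ← intervalIntegral.integral_neg]
    congr 1
    refine intervalIntegral.integral_congr fun u _ => ?_
    have e : (-h) ^ 2 + 2 * -h * β u + ‖γ (t + u) - γ t‖ ^ 2
      = h ^ 2 + 2 * h * -β u + ‖γ (t + u) - γ t‖ ^ 2 := by ring
    rw [e]
    ring
  · have e : ∫ u in (-R)..R, -β u / ‖γ (t + u) - γ t‖ ^ 2 * σ (t + u)
        = -∫ u in (-R)..R, β u / ‖γ (t + u) - γ t‖ ^ 2 * σ (t + u) := by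
      rw [← intervalIntegral.integral_neg]
      refine intervalIntegral.integral_congr fun u _ => ?_
      ring
    rw [e, add_zero]
    have := Real.pi_ne_zero
    field_simp
    ring
end
end
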